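/- Let X be a set of regular infinite cardinality ℵ_α. Then the number of precomplete clones on X that contain all permutations but not all unary operations equals max(|α|, ℵ0). -/

import Mathlib

universe u v

open Cardinal

/-- The set of all finitary operations on `X`: an `n`-th component element is an
operation of arity `n + 1` (so all arities are `≥ 1`). -/
abbrev Ops (X : Type u) : Type u := Σ n : ℕ, ((Fin (n + 1) → X) → X)

/-- A clone: contains all projections and is closed under composition. -/
def IsClone {X : Type u} (C : Set (Ops X)) : Prop :=
  (∀ (n : ℕ) (k : Fin (n + 1)), (⟨n, fun x => x k⟩ : Ops X) ∈ C) ∧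
  ∀ (n m : ℕ) (f : (Fin (n + 1) → X) → X), (⟨n, f⟩ : Ops X) ∈ C →
    ∀ g : Fin (n + 1) → ((Fin (m + 1) → X) → X), (∀ i, (⟨m, g i⟩ : Ops X) ∈ C) →
      (⟨m, fun x => f fun i => g i x⟩ : Ops X) ∈ C

/-- The clone generated by a set of operations. -/
def cloneGen {X : Type u} (F : Set (Ops X)) : Set (Ops X) :=
  ⋂₀ {C : Set (Ops X) | IsClone C ∧ F ⊆ C}

/-- A precomplete (maximal) clone. -/
def IsPrecompleteClone {X : Type u} (C : Set (Ops X)) : Prop :=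
  IsClone C ∧ C ≠ Set.univ ∧ ∀ f : Ops X, f ∉ C → cloneGen (insert f C) = Set.univ

/-- A unary function, viewed as a unary operation in `Ops X`. -/
def unaryOp {X : Type u} (F : X → X) : Ops X := ⟨0, fun x => F (x 0)⟩

/-- The polymorphism clone of a set of binary operations. -/
def Pol2 {X : Type u} (H : Set (X → X → X)) : Set (Ops X) :=
  {f : Ops X | ∀ g : Fin (f.1 + 1) → (X → X → X), (∀ i, g i ∈ H) →
    (fun x y => f.2 fun i => g i x y) ∈ H}

/-!
An operation belongs to `defectClone X l` if the image of a box whose sides all omit at least `l`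
points again omits at least `l` points. There are `max |α| ℵ₀` cardinals `l` with `1 ≤ l ≤ #X`,
different ones give different, even incomparable, clones, and each of these clones contains all
permutations and all operations omitting `#X` values, but not all unary operations.

The core is that a clone `C` with all permutations contains all unary operations as soon as it lies
in no `defectClone X l` and in none of six further polymorphism clones. Descending along the
cardinals, the operations that violate the defect conditions combine into one mapping a box, whose
sides omit `#X` points each, onto `X`. The two families about fibre sizes give a unary member with
`#X` many fibres of size `#X`, and the two facts together give a surjection in `C` all of whose
fibres have size `#X`. The two families about ranges and the family of binary functions then make
every function with such fibres available, the last family separates points again, and an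
injective coding by a member of `C` yields all unary operations. Regularity enters through the
pigeonhole principle: a function is injective or constant on a subset of full size.

Applied to clones above `defectClone X l` this shows that `defectClone X l` is precomplete. Applied
to a precomplete clone it shows that at most four others occur, since two of the six polymorphism
clones contain all unary operations; four more clones do not change an infinite count.
-/

section

open Set Function

variable {X : Type u}

section SetCardinality

theorem mk_eq_of_subset {A B : Set X} (h : A ⊆ B) (hA : #A = #X) : #B = #X :=
  (mk_set_le B).antisymm (hA ▸ mk_le_mk_of_subset h)

theorem mk_eq_of_injective_of_forall_mem {W : Type u} (hW : #W ≤ #X) {A : Set W} {j : X → W}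
    (hj : Injective j) (hA : ∀ x, j x ∈ A) : #A = #X :=
  ((mk_set_le A).trans hW).antisymm <|
    mk_le_of_injective (f := codRestrict j A hA) (hj.codRestrict hA)

theorem mk_compl_eq_of_disjoint {A B : Set X} (h : Disjoint A B) (hA : #A = #X) :
    #(Bᶜ : Set X) = #X :=
  mk_eq_of_subset h.subset_compl_right hA

theorem mk_union_lt [Infinite X] {A B : Set X} (hA : #A < #X) (hB : #B < #X) :
    #(A ∪ B : Set X) < #X :=
  (mk_union_le A B).trans_lt (add_lt_of_lt (aleph0_le_mk X) hA hB)

theorem mk_iUnion_fin_lt [Infinite X] {n : ℕ} {A : Fin n → Set X} (hA : ∀ i, #(A i) < #X) :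
    #(⋃ i, A i) < #X := by
  induction n with
  | zero => simpa using aleph0_pos.trans_le (aleph0_le_mk X)
  | succ n ih =>
    have hU : (⋃ i, A i) = A 0 ∪ ⋃ i : Fin n, A i.succ := by
      ext x
      simp [Fin.exists_fin_succ]
    rw [hU]
    exact mk_union_lt (hA 0) (ih fun i => hA i.succ)

theorem mk_diff_eq_of_lt [Infinite X] {A B : Set X} (hA : #A = #X) (hB : #B < #X) :
    #(A \ B : Set X) = #X := by
  by_contra hne
  have hdiff : #(A \ B : Set X) < #X := (mk_set_le _).lt_of_ne hne
  have hsub : A ⊆ A \ B ∪ B := by simp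
  exact ((mk_le_mk_of_subset hsub).trans_lt (mk_union_lt hdiff hB)).ne hA

theorem exists_disjoint_union_mk_eq {Y : Type u} {S : Set Y} (hS : ℵ₀ ≤ #S) :
    ∃ A B : Set Y, A ∪ B = S ∧ Disjoint A B ∧ #A = #S ∧ #B = #S := by
  obtain ⟨A, B, hAB, hdisj, hcard⟩ :=
    (infinite_coe_iff.1 (infinite_iff.2 hS)).exists_union_disjoint_cardinal_eq_of_infinite
  have hsum : #A + #A = #S := by rw [← hAB, mk_union_of_disjoint hdisj, hcard]
  have hA : ℵ₀ ≤ #A := by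
    by_contra! hfin
    exact (hsum ▸ add_lt_aleph0 hfin hfin).not_ge hS
  have hAS : #A = #S := by rw [← hsum, add_eq_self hA]
  exact ⟨A, B, hAB, hdisj, hAS, hcard ▸ hAS⟩

theorem exists_subset_mk_eq_mk_diff_eq {Y : Type u} {S : Set Y} (hS : ℵ₀ ≤ #S) :
    ∃ A ⊆ S, #A = #S ∧ #(S \ A : Set Y) = #S := by
  obtain ⟨A, B, rfl, hdisj, hA, hB⟩ := exists_disjoint_union_mk_eq hS
  exact ⟨A, subset_union_left, hA, by rw [union_sdiff_left, hdisj.symm.sdiff_eq_left, hB]⟩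

theorem mk_compl_range_inl_of_injective {T : Type u} {i : T ⊕ X → X} (hi : Injective i) :
    #((range (i ∘ Sum.inl))ᶜ : Set X) = #X := by
  refine mk_compl_eq_of_disjoint ?_ (mk_range_eq _ (hi.comp Sum.inr_injective))
  rw [Set.disjoint_left]
  rintro _ ⟨x, rfl⟩ ⟨t, ht⟩
  exact Sum.inl_ne_inr (hi ht)

theorem exists_injective_mk_compl_range [Infinite X] {T : Type u} (hT : #T ≤ #X) :
    ∃ j : T → X, Injective j ∧ #((range j)ᶜ : Set X) = #X := by
  have hle : #(T ⊕ X) ≤ #X := by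
    rw [mk_sum, lift_id, lift_id, add_eq_right (aleph0_le_mk X) hT]
  obtain ⟨i⟩ := hle
  exact ⟨i ∘ Sum.inl, i.injective.comp Sum.inl_injective,
    mk_compl_range_inl_of_injective i.injective⟩

theorem exists_equiv_eqOn {Y Z : Type u} {s : Set Y} {f : Y → Z} (hf : InjOn f s)
    (hs : #(sᶜ : Set Y) = #((f '' s)ᶜ : Set Z)) : ∃ e : Y ≃ Z, EqOn e f s := by
  rw [image_eq_range] at hs
  obtain ⟨e, he⟩ := extend_function ⟨fun x : s => f x, hf.injective⟩ (Cardinal.eq.1 hs)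
  exact ⟨e, fun x hx => he ⟨x, hx⟩⟩

theorem exists_equiv_extending_inl {T : Type u} {i : T ⊕ X → X} (hi : Injective i) :
    ∃ e : T ⊕ X ≃ X, ∀ t, e (Sum.inl t) = i (Sum.inl t) := by
  obtain ⟨e, he⟩ := exists_equiv_eqOn (s := range Sum.inl) hi.injOn (by
    rw [← range_comp, mk_compl_range_inl_of_injective hi, compl_range_inl,
      mk_range_eq _ Sum.inr_injective])
  exact ⟨e, fun t => he ⟨t, rfl⟩⟩

theorem exists_perm_mapsTo_of_injective {D V : Set X} {j : D → X} (hj : Injective j)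
    (hV : range j ⊆ V) (hD : #(Dᶜ : Set X) = #((range j)ᶜ : Set X)) :
    ∃ σ : Equiv.Perm X, MapsTo σ D V := by
  obtain ⟨σ, hσ⟩ := extend_function ⟨j, hj⟩ (Cardinal.eq.1 hD)
  exact ⟨σ, fun x hx => hσ ⟨x, hx⟩ ▸ hV ⟨_, rfl⟩⟩

theorem exists_perm_mapsTo_of_mk_compl [Infinite X] {D V : Set X} (hD : #(Dᶜ : Set X) = #X)
    (hV : #V = #X) : ∃ σ : Equiv.Perm X, MapsTo σ D V := by
  obtain ⟨A, hAV, hA, hVA⟩ := exists_subset_mk_eq_mk_diff_eq (hV ▸ aleph0_le_mk X)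
  obtain ⟨j⟩ : #D ≤ #A := (mk_set_le D).trans (hA.trans hV).ge
  have hjA : range (Subtype.val ∘ j) ⊆ A := by
    rintro _ ⟨x, rfl⟩
    exact (j x).2
  refine exists_perm_mapsTo_of_injective (Subtype.val_injective.comp j.injective)
    (hjA.trans hAV) (hD.trans (mk_compl_eq_of_disjoint ?_ (hVA.trans hV)).symm)
  exact disjoint_sdiff_left.mono_right hjA

theorem exists_perm_mapsTo_of_mk_lt [Infinite X] {E F : Set X} (hE : #E < #X) (hEF : #E ≤ #F) :
    ∃ σ : Equiv.Perm X, MapsTo σ E F := by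
  obtain ⟨j⟩ := hEF
  have hj : Injective (Subtype.val ∘ j) := Subtype.val_injective.comp j.injective
  refine exists_perm_mapsTo_of_injective hj ?_ ?_
  · rintro _ ⟨x, rfl⟩
    exact (j x).2
  · rw [mk_compl_of_infinite E hE, mk_compl_of_infinite _ (by rwa [mk_range_eq _ hj])]

theorem nonempty_equiv_prod [Infinite X] {D : Type u} [Nonempty D] (hD : #D ≤ #X) :
    Nonempty (X ≃ D × X) := by
  refine Cardinal.eq.1 ?_
  rw [mk_prod, lift_id, lift_id,
    mul_eq_right (aleph0_le_mk X) hD (mk_ne_zero D)]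

theorem mk_prod_le [Infinite X] {D : Type u} (hD : #D ≤ #X) : #(D × X) ≤ #X := by
  rw [mk_prod, lift_id, lift_id]
  exact (mul_le_mul_left hD _).trans (mul_eq_self (aleph0_le_mk X)).le

theorem mk_fin_arrow_le [Infinite X] (n : ℕ) : #(Fin n → X) ≤ #X := by
  simpa using power_nat_le (n := n) (aleph0_le_mk X)

end SetCardinality

section Thinning

theorem exists_subset_forall_of_antitone {ι Y : Type*} [Finite ι] {L : Set Y → Prop}
    {P : ι → Set Y → Prop} (hP : ∀ i, Antitone (P i))
    (hstep : ∀ i Z, L Z → ∃ Z' ⊆ Z, L Z' ∧ P i Z') {Z : Set Y} (hZ : L Z) :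
    ∃ Z' ⊆ Z, L Z' ∧ ∀ i, P i Z' := by
  classical
  obtain ⟨_⟩ := nonempty_fintype ι
  suffices h : ∀ s : Finset ι, ∃ Z' ⊆ Z, L Z' ∧ ∀ i ∈ s, P i Z' by
    simpa using h Finset.univ
  intro s
  induction s using Finset.induction_on with
  | empty => exact ⟨Z, subset_rfl, hZ, by simp⟩
  | insert i s _ ih =>
    obtain ⟨Z₁, hZ₁, hL₁, hP₁⟩ := ih
    obtain ⟨Z₂, hZ₂, hL₂, hP₂⟩ := hstep i Z₁ hL₁
    refine ⟨Z₂, hZ₂.trans hZ₁, hL₂, fun j hj => ?_⟩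
    rcases Finset.mem_insert.1 hj with rfl | hj
    · exact hP₂
    · exact hP j hZ₂ (hP₁ j hj)

theorem exists_subset_injOn_mk_eq {Y T : Type u} {κ : Cardinal.{u}} (g : Y → T) {Z : Set Y}
    (hZ : #Z = κ) (hg : κ ≤ #(g '' Z)) : ∃ Z' ⊆ Z, #Z' = κ ∧ InjOn g Z' := by
  obtain ⟨Z', hsub, hbij⟩ := exists_subset_bijOn Z g
  have hcard : #Z' = #(g '' Z) := by
    rw [← hbij.image_eq, mk_image_eq_of_injOn _ _ hbij.injOn]
  exact ⟨Z', hsub, hcard.trans ((mk_image_le.trans hZ.le).antisymm hg), hbij.injOn⟩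

theorem exists_subset_const_mk_eq {Y T : Type u} {κ : Cardinal.{u}} (hκ : κ.IsRegular)
    (g : Y → T) {Z : Set Y} (hZ : #Z = κ) (hg : #(g '' Z) < κ) :
    ∃ Z' ⊆ Z, #Z' = κ ∧ ∃ c, ∀ z ∈ Z', g z = c := by
  obtain ⟨⟨c, _⟩, Z', hsub, hcard, hc⟩ := infinite_pigeonhole_set
    (fun z : Z => (⟨g z, z, z.2, rfl⟩ : g '' Z)) κ hZ.ge hκ.aleph0_le (by rwa [hκ.cof_ord])
  exact ⟨Z', hsub, ((mk_le_mk_of_subset hsub).trans hZ.le).antisymm hcard, c,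
    fun z hz => congrArg Subtype.val (hc hz)⟩

theorem exists_subset_forall_injOn_or_const {ι : Type*} [Finite ι] {Y T : Type u}
    {κ : Cardinal.{u}} (hκ : κ.IsRegular) (g : ι → Y → T) {Z : Set Y} (hZ : #Z = κ) :
    ∃ Z' ⊆ Z, #Z' = κ ∧ ∀ i, InjOn (g i) Z' ∨ ∃ c, ∀ z ∈ Z', g i z = c := by
  refine exists_subset_forall_of_antitone (L := fun Z => #Z = κ)
    (P := fun i Z => InjOn (g i) Z ∨ ∃ c, ∀ z ∈ Z, g i z = c) ?_ ?_ hZ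
  · rintro i A B hAB (hinj | ⟨c, hc⟩)
    exacts [Or.inl (hinj.mono hAB), Or.inr ⟨c, fun z hz => hc z (hAB hz)⟩]
  · intro i Z hZ
    rcases lt_or_ge #(g i '' Z) κ with hlt | hge
    · obtain ⟨Z', hsub, hcard, hc⟩ := exists_subset_const_mk_eq hκ (g i) hZ hlt
      exact ⟨Z', hsub, hcard, Or.inr hc⟩
    · obtain ⟨Z', hsub, hcard, hinj⟩ := exists_subset_injOn_mk_eq (g i) hZ hge
      exact ⟨Z', hsub, hcard, Or.inl hinj⟩

end Thinning

section Transversals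

theorem exists_mem_forall_ne {ι : Type} [Finite ι] {Y T : Type u} {K : Type u} {Z : Set Y}
    {g : ι → Y → T} (hg : ∀ i, InjOn (g i) Z) (hZ : ℵ₀ ≤ #Z) (hK : #K < #Z) (q : ι → K → T) :
    ∃ y ∈ Z, ∀ i k, g i y ≠ q i k := by
  by_contra! hn
  choose i k hik using hn
  let code : Z → ULift.{u} ι × K := fun y => (⟨i y y.2⟩, k y y.2)
  have hcode : Injective code := by
    intro y y' hyy'
    obtain ⟨hi, hk⟩ := Prod.ext_iff.1 hyy'
    have hi' : i y y.2 = i y' y'.2 := congrArg ULift.down hi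
    have hk' : k y y.2 = k y' y'.2 := hk
    refine Subtype.ext (hg (i y y.2) y.2 y'.2 ?_)
    rw [hik, hk', hi', hik]
  have hle := mk_le_of_injective hcode
  rw [mk_prod, lift_id, lift_id] at hle
  exact hle.not_gt (mul_lt_of_lt hZ ((lt_aleph0_of_finite _).trans_le hZ) hK)

theorem exists_forall_injective_comp {ι : Type} [Finite ι] {Y T J : Type u} {κ : Cardinal.{u}}
    (hκ : ℵ₀ ≤ κ) (hJ : #J ≤ κ) {Z : J → Set Y} (hZ : ∀ j, κ ≤ #(Z j)) {g : ι → Y → T}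
    (hg : ∀ i j, InjOn (g i) (Z j)) :
    ∃ z : J → Y, (∀ j, z j ∈ Z j) ∧ ∀ i, Injective (g i ∘ z) := by
  obtain ⟨r, hwo, hr⟩ := exists_ord_eq J
  have hnext : ∀ (j : J) (prev : ∀ j', r j' j → Y),
      ∃ y ∈ Z j, ∀ i (j' : {j' // r j' j}), g i y ≠ g i (prev j' j'.2) := fun j prev =>
    exists_mem_forall_ne (hg · j) (hκ.trans (hZ j))
      ((card_typein_lt j hr).trans_le (hJ.trans (hZ j))) fun i j' => g i (prev j' j'.2)
  choose next hnext_mem hnext_ne using hnext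
  have hwf : WellFounded r := IsWellFounded.wf
  let z : J → Y := hwf.fix next
  have hz : ∀ j, z j = next j fun j' _ => z j' := hwf.fix_eq next
  have hne : ∀ i a b, r a b → g i (z a) ≠ g i (z b) := fun i a b hab h =>
    hnext_ne b (fun j' _ => z j') i ⟨a, hab⟩ (by rw [← hz, ← h])
  refine ⟨z, fun j => hz j ▸ hnext_mem _ _, fun i a b hab => ?_⟩
  rcases trichotomous_of r a b with h | h | h
  exacts [absurd hab (hne i a b h), h, absurd hab.symm (hne i b a h)]

end Transversals

section Clones

theorem isClone_cloneGen (F : Set (Ops X)) : IsClone (cloneGen F) :=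
  ⟨fun n k _ hD => hD.1.1 n k, fun n m f hf g hg D hD =>
    hD.1.2 n m f (hf D hD) g fun i => hg i D hD⟩

theorem subset_cloneGen (F : Set (Ops X)) : F ⊆ cloneGen F :=
  subset_sInter fun _ hD => hD.2

theorem cloneGen_subset {F D : Set (Ops X)} (hD : IsClone D) (h : F ⊆ D) : cloneGen F ⊆ D :=
  sInter_subset_of_mem ⟨hD, h⟩

theorem IsPrecompleteClone.eq_of_subset {C P : Set (Ops X)} (hC : IsPrecompleteClone C)
    (hP : IsClone P) (hne : P ≠ Set.univ) (h : C ⊆ P) : C = P := by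
  refine h.antisymm fun f hf => by_contra fun hfC => hne (univ_subset_iff.1 ?_)
  rw [← hC.2.2 f hfC]
  exact cloneGen_subset hP (insert_subset hf h)

variable {C : Set (Ops X)}

theorem IsClone.unaryOp_id_mem (hC : IsClone C) : unaryOp id ∈ C :=
  hC.1 0 0

theorem IsClone.unaryOp_op_mem (hC : IsClone C) {n : ℕ} {f : (Fin (n + 1) → X) → X}
    (hf : (⟨n, f⟩ : Ops X) ∈ C) {h : Fin (n + 1) → X → X} (hh : ∀ i, unaryOp (h i) ∈ C) :
    unaryOp (fun x => f fun i => h i x) ∈ C :=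
  hC.2 n 0 f hf (fun i x => h i (x 0)) hh

theorem IsClone.unaryOp_comp_mem (hC : IsClone C) {F G : X → X} (hF : unaryOp F ∈ C)
    (hG : unaryOp G ∈ C) : unaryOp (F ∘ G) ∈ C :=
  hC.unaryOp_op_mem hF fun _ => hG

theorem IsClone.unaryOp_op_op_mem (hC : IsClone C) {m n : ℕ} {f : (Fin (m + 1) → X) → X}
    (hf : (⟨m, f⟩ : Ops X) ∈ C) {F : Fin (m + 1) → X → X} (hF : ∀ j, unaryOp (F j) ∈ C)
    {g : (Fin (n + 1) → X) → X} (hg : (⟨n, g⟩ : Ops X) ∈ C) :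
    ∃ (N : ℕ) (E : Fin (m + 1) × Fin (n + 1) ≃ Fin (N + 1)),
      (⟨N, fun x => f fun j => F j (g fun i => x (E (j, i)))⟩ : Ops X) ∈ C := by
  have hN : (m + 1) * (n + 1) = m * n + m + n + 1 := by ring
  let E : Fin (m + 1) × Fin (n + 1) ≃ Fin (m * n + m + n + 1) :=
    finProdFinEquiv.trans (finCongr hN)
  refine ⟨_, E, hC.2 m _ f hf _ fun j => ?_⟩
  refine hC.2 0 _ _ (hF j) (fun _ x => g fun i => x (E (j, i))) fun _ => ?_
  exact hC.2 n _ g hg (fun i x => x (E (j, i))) fun i => hC.1 _ _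

/-- The clone of all operations on `X` preserving a set `M` of functions `ι → X` under pointwise
application; `M` is a set of unary operations for `ι = X` and of (uncurried) binary operations for
`ι = X × X`. -/
def polymorphisms {ι : Type u} (M : Set (ι → X)) : Set (Ops X) :=
  {f | ∀ g : Fin (f.1 + 1) → ι → X, (∀ i, g i ∈ M) → (fun t => f.2 fun i => g i t) ∈ M}

theorem isClone_polymorphisms {ι : Type u} (M : Set (ι → X)) : IsClone (polymorphisms M) :=
  ⟨fun _ k _ hg => hg k, fun _ _ _ hf g hg p hp =>
    hf (fun i t => g i fun j => p j t) fun i => hg i p hp⟩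

theorem exists_mem_of_not_subset_polymorphisms {ι : Type u} {M : Set (ι → X)}
    (h : ¬ C ⊆ polymorphisms M) :
    ∃ (n : ℕ) (f : (Fin (n + 1) → X) → X) (g : Fin (n + 1) → ι → X),
      (⟨n, f⟩ : Ops X) ∈ C ∧ (∀ i, g i ∈ M) ∧ (fun t => f fun i => g i t) ∉ M := by
  obtain ⟨⟨n, f⟩, hf, hfM⟩ := not_subset.1 h
  simp only [polymorphisms, mem_ofPred_eq, not_forall] at hfM
  obtain ⟨g, hg, hgM⟩ := hfM
  exact ⟨n, f, g, hf, hg, hgM⟩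

theorem mem_of_unaryOp_mem_polymorphisms {M : Set (X → X)} {F : X → X} (hid : id ∈ M)
    (h : unaryOp F ∈ polymorphisms M) : F ∈ M :=
  h (fun _ => id) fun _ => hid

/-- A clone containing all permutations of the base set. -/
structure IsPermClone (C : Set (Ops X)) : Prop where
  isClone : IsClone C
  perm_mem : ∀ γ : Equiv.Perm X, unaryOp γ ∈ C

end Clones

section UnaryMem

variable {C : Set (Ops X)} {W W' : Type u}

/-- The function `h : W → X` becomes a member of `C` when `W` is identified with `X`. For clones
containing all permutations the choice of the identification does not matter, and working with
arbitrary index types `W` avoids coding pairs and disjoint unions into `X`. -/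
def UnaryMem (C : Set (Ops X)) (h : W → X) : Prop :=
  ∃ e : X ≃ W, unaryOp (h ∘ e) ∈ C

theorem UnaryMem.mk_eq {h : W → X} (hh : UnaryMem C h) : #W = #X :=
  (mk_congr hh.choose).symm

theorem UnaryMem.of_unaryOp_mem {F : X → X} (hF : unaryOp F ∈ C) : UnaryMem C F :=
  ⟨Equiv.refl X, hF⟩

theorem UnaryMem.comp_equiv {h : W → X} (hh : UnaryMem C h) (e : W' ≃ W) :
    UnaryMem C (h ∘ e) := by
  obtain ⟨e₀, he₀⟩ := hh
  refine ⟨e₀.trans e.symm, ?_⟩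
  convert he₀ using 2
  ext x
  simp

theorem UnaryMem.unaryOp_comp_mem (hC : IsPermClone C) {h : W → X} (hh : UnaryMem C h)
    (e : X ≃ W) : unaryOp (h ∘ e) ∈ C := by
  obtain ⟨e₀, he₀⟩ := hh
  have hcomp := hC.isClone.unaryOp_comp_mem he₀ (hC.perm_mem (e.trans e₀.symm))
  convert hcomp using 2
  ext x
  simp

theorem UnaryMem.unaryOp_mem (hC : IsPermClone C) {F : X → X} (hF : UnaryMem C F) :
    unaryOp F ∈ C :=
  hF.unaryOp_comp_mem hC (Equiv.refl X)

theorem UnaryMem.comp_left (hC : IsClone C) {F : X → X} (hF : unaryOp F ∈ C) {h : W → X}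
    (hh : UnaryMem C h) : UnaryMem C (F ∘ h) := by
  obtain ⟨e₀, he₀⟩ := hh
  exact ⟨e₀, hC.unaryOp_comp_mem hF he₀⟩

theorem IsClone.unaryMem_equiv (hC : IsClone C) (e : W ≃ X) : UnaryMem C e :=
  ⟨e.symm, by rw [Equiv.self_comp_symm]; exact hC.unaryOp_id_mem⟩

theorem IsPermClone.unaryMem_op (hC : IsPermClone C) {n : ℕ} {f : (Fin (n + 1) → X) → X}
    (hf : (⟨n, f⟩ : Ops X) ∈ C) {h : Fin (n + 1) → W → X} (hh : ∀ i, UnaryMem C (h i)) :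
    UnaryMem C fun w => f fun i => h i w := by
  obtain ⟨e₀, -⟩ := hh 0
  exact ⟨e₀, hC.isClone.unaryOp_op_mem hf fun i => (hh i).unaryOp_comp_mem hC e₀⟩

theorem exists_equiv_comp_eq_of_mk_fiber_eq {Y : Type u} {u : W → Y} {h : W' → Y}
    (hfib : ∀ y, #(h ⁻¹' {y}) = #(u ⁻¹' {y})) : ∃ e : W' ≃ W, u ∘ e = h := by
  have E : ∀ y, h ⁻¹' {y} ≃ u ⁻¹' {y} := fun y => Classical.choice (Cardinal.eq.1 (hfib y))
  refine ⟨(Equiv.sigmaFiberEquiv h).symm.trans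
    ((Equiv.sigmaCongrRight E).trans (Equiv.sigmaFiberEquiv u)), ?_⟩
  funext w
  exact (E (h w) ⟨w, rfl⟩).2

theorem UnaryMem.of_mk_fiber_eq {u : W → X} {h : W' → X} (hu : UnaryMem C u)
    (hfib : ∀ y, #(h ⁻¹' {y}) = #(u ⁻¹' {y})) : UnaryMem C h := by
  obtain ⟨e, rfl⟩ := exists_equiv_comp_eq_of_mk_fiber_eq hfib
  exact hu.comp_equiv e

theorem UnaryMem.sumElim [Infinite X] {T : Type u} (hT : #T ≤ #X) {u : W → X}
    (hu : UnaryMem C u) {v : T → X} (hv : ∀ t, #(u ⁻¹' {v t}) = #X) :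
    UnaryMem C (Sum.elim v u) := by
  refine hu.of_mk_fiber_eq fun y => ?_
  rw [preimage_sumElim, mk_union_of_disjoint (disjoint_image_inl_image_inr),
    mk_image_eq Sum.inl_injective, mk_image_eq Sum.inr_injective]
  rcases (v ⁻¹' {y}).eq_empty_or_nonempty with hempty | ⟨t, rfl⟩
  · rw [hempty, mk_eq_zero, zero_add]
  · rw [hv t, add_eq_right (aleph0_le_mk X) ((mk_set_le _).trans hT)]

end UnaryMem

section ThickFibers

variable {C : Set (Ops X)} {W W' : Type u}

/-- Every nonempty fibre of `k` has the full cardinality of `X`. For domains of cardinality `#X`,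
such a function is determined up to a bijection of the domain by its range. -/
def ThickFibers (k : W → X) : Prop :=
  ∀ w, #(k ⁻¹' {k w}) = #X

theorem ThickFibers.comp_left {k : W → X} (hk : ThickFibers k) (hW : #W = #X) (F : X → X) :
    ThickFibers (F ∘ k) := fun w =>
  ((mk_set_le _).trans hW.le).antisymm <| (hk w).ge.trans <| mk_le_mk_of_subset fun _ hw' =>
    congrArg F hw'

theorem thickFibers_comp_fst [Infinite X] {D : Type u} (hD : #D ≤ #X) (q : D → X) :
    ThickFibers fun p : D × X => q p.1 := fun p =>
  mk_eq_of_injective_of_forall_mem (mk_prod_le hD) (Prod.mk_right_injective p.1) fun _ => rfl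

theorem UnaryMem.of_thickFibers {u : W → X} {h : W' → X} (hmem : UnaryMem C u)
    (hu : ThickFibers u) (hh : ThickFibers h) (hrange : range h = range u) : UnaryMem C h := by
  refine hmem.of_mk_fiber_eq fun y => ?_
  by_cases hy : y ∈ range h
  · obtain ⟨w, hw⟩ : y ∈ range u := hrange ▸ hy
    obtain ⟨w', rfl⟩ := hy
    rw [hh w', ← hw, hu w]
  · rw [preimage_singleton_eq_empty.2 hy, preimage_singleton_eq_empty.2 (hrange ▸ hy),
      mk_eq_zero, mk_eq_zero]

end ThickFibers

section InvariantFamilies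

variable (X)

/-- The operations under which the images of boxes whose sides all have complements of size at
least `l` again have complements of size at least `l`. For `1 ≤ l ≤ #X` these are the precomplete
clones being counted, up to finitely many exceptions. -/
def defectClone (l : Cardinal.{u}) : Set (Ops X) :=
  {f | ∀ D : Fin (f.1 + 1) → Set X, (∀ i, l ≤ #((D i)ᶜ : Set X)) →
    l ≤ #((f.2 '' Set.univ.pi D)ᶜ : Set X)}

/-- The unary functions with fewer than `#X` fibres of full size. The polymorphism clone of this
family is one of the four exceptional candidates for precomplete clones. -/
def fewLargeFibers : Set (X → X) :=
  {h | #{y | #(h ⁻¹' {y}) = #X} < #X}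

/-- The unary functions without fibres of full size, the second exceptional family. -/
def smallFibers : Set (X → X) :=
  {h | ∀ y, #(h ⁻¹' {y}) < #X}

/-- The unary functions missing fewer than `#X` values, the third exceptional family. -/
def almostSurjective : Set (X → X) :=
  {h | #((range h)ᶜ : Set X) < #X}

/-- The unary functions that miss fewer than `#X` values or are constant, the fourth exceptional
family. -/
def almostSurjectiveOrConst : Set (X → X) :=
  {h | #((range h)ᶜ : Set X) < #X ∨ ∀ x y, h x = h y}

/-- The unary functions that are injective only on a small set: fewer than `#X` points form a
fibre of their own. Its polymorphism clone contains all unary operations. -/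
def fewSingletonFibers : Set (X → X) :=
  {h | #{x | ∀ x', h x' = h x → x' = x} < #X}

/-- The binary functions all of whose rows, or all of whose columns, have small range. Its
polymorphism clone contains all unary operations. -/
def smallRowsOrColumns : Set (X × X → X) :=
  {g | (∀ x, #(range fun y => g (x, y)) < #X) ∨ ∀ y, #(range fun x => g (x, y)) < #X}

variable {X}

theorem isClone_defectClone (l : Cardinal.{u}) : IsClone (defectClone X l) := by
  refine ⟨fun n k D hD => (hD k).trans (mk_le_mk_of_subset ?_), fun n m f hf g hg D hD =>
    (hf (fun i => g i '' Set.univ.pi D) fun i => hg i D hD).trans (mk_le_mk_of_subset ?_)⟩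
  · rintro _ hx ⟨y, hy, rfl⟩
    exact hx (hy k trivial)
  · rintro _ hx ⟨y, hy, rfl⟩
    exact hx ⟨fun i => g i y, fun i _ => ⟨y, hy, rfl⟩, rfl⟩

end InvariantFamilies

section BoxDefects

variable {C : Set (Ops X)}

/-- Some member of `C` maps some box, whose sides have complements of full size, onto a set whose
complement has size `μ`. -/
def HasBoxDefect (C : Set (Ops X)) (μ : Cardinal.{u}) : Prop :=
  ∃ (n : ℕ) (f : (Fin (n + 1) → X) → X) (D : Fin (n + 1) → Set X), (⟨n, f⟩ : Ops X) ∈ C ∧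
    (∀ i, #((D i)ᶜ : Set X) = #X) ∧ #((f '' Set.univ.pi D)ᶜ : Set X) = μ

theorem exists_box_of_not_subset_defectClone {l : Cardinal.{u}} (h : ¬ C ⊆ defectClone X l) :
    ∃ (n : ℕ) (f : (Fin (n + 1) → X) → X) (D : Fin (n + 1) → Set X), (⟨n, f⟩ : Ops X) ∈ C ∧
      (∀ i, l ≤ #((D i)ᶜ : Set X)) ∧ #((f '' Set.univ.pi D)ᶜ : Set X) < l := by
  obtain ⟨⟨n, f⟩, hf, hfl⟩ := not_subset.1 h
  simp only [defectClone, mem_ofPred_eq, not_forall, not_le] at hfl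
  obtain ⟨D, hD, hlt⟩ := hfl
  exact ⟨n, f, D, hf, hD, hlt⟩

theorem exists_hasBoxDefect_lt_mk (h : ¬ C ⊆ defectClone X #X) :
    ∃ μ < #X, HasBoxDefect C μ := by
  obtain ⟨n, f, D, hf, hD, hlt⟩ := exists_box_of_not_subset_defectClone h
  exact ⟨_, hlt, n, f, D, hf, fun i => (mk_set_le _).antisymm (hD i), rfl⟩

theorem HasBoxDefect.exists_lt [Infinite X] (hC : IsPermClone C) {μ : Cardinal.{u}}
    (hbox : HasBoxDefect C μ) (hμ : μ < #X) (h : ¬ C ⊆ defectClone X μ) :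
    ∃ ν < μ, HasBoxDefect C ν := by
  obtain ⟨n, f, D, hf, hD, rfl⟩ := hbox
  obtain ⟨m, f', D', hf', hD', hlt⟩ := exists_box_of_not_subset_defectClone h
  -- Once the defect of `f` is moved outside `D' j`, the values of `f` cover all of `D' j`.
  choose π hπ using fun j => exists_perm_mapsTo_of_mk_lt hμ (hD' j)
  obtain ⟨N, E, hF⟩ := hC.isClone.unaryOp_op_op_mem hf' (fun j => hC.perm_mem (π j)) hf
  refine ⟨_, (mk_le_mk_of_subset (compl_subset_compl.2 ?_)).trans_lt hlt, N, _,
    fun k => D (E.symm k).2, hF, fun k => hD _, rfl⟩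
  rintro _ ⟨x, hx, rfl⟩
  have hcover : ∀ j, ∃ y ∈ Set.univ.pi D, π j (f y) = x j := by
    intro j
    by_contra hnot
    have hdefect : (π j).symm (x j) ∈ (f '' Set.univ.pi D)ᶜ := fun ⟨y, hy, hyx⟩ =>
      hnot ⟨y, hy, by rw [hyx, Equiv.apply_symm_apply]⟩
    have hmem := hπ j hdefect
    rw [Equiv.apply_symm_apply] at hmem
    exact hmem (hx j trivial)
  choose y hyD hyx using hcover
  refine ⟨fun k => y (E.symm k).1 (E.symm k).2, fun k _ => hyD _ _ trivial, ?_⟩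
  simp only [Equiv.symm_apply_apply, hyx]

theorem IsPermClone.hasBoxDefect_zero [Infinite X] (hC : IsPermClone C)
    (h : ∀ l : Cardinal.{u}, 1 ≤ l → l ≤ #X → ¬ C ⊆ defectClone X l) : HasBoxDefect C 0 := by
  obtain ⟨μ, hμ, hbox⟩ :=
    exists_hasBoxDefect_lt_mk (h #X (one_le_aleph0.trans (aleph0_le_mk X)) le_rfl)
  induction μ using WellFoundedLT.induction with
  | _ μ ih =>
    rcases eq_or_ne μ 0 with rfl | hμ₀
    · exact hbox
    · obtain ⟨ν, hν, hbox'⟩ := hbox.exists_lt hC hμ (h μ (Cardinal.one_le_iff_ne_zero.2 hμ₀) hμ.le)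
      exact ih ν hν (hν.trans hμ) hbox'

end BoxDefects

section LargeFibers

variable {C : Set (Ops X)}

theorem IsPermClone.exists_unaryMem_sumElim_const [Infinite X] (hC : IsPermClone C) {u : X → X}
    {p : X} (hu : unaryOp u ∈ C) (hp : #(u ⁻¹' {p}) = #X) {T : Type u} (hT : #T ≤ #X) (c : X) :
    ∃ v : X → X, UnaryMem C (Sum.elim (fun _ : T => c) v) := by
  classical
  have hswap := hC.isClone.unaryOp_comp_mem (hC.perm_mem (Equiv.swap p c)) hu
  refine ⟨_, (UnaryMem.of_unaryOp_mem hswap).sumElim hT fun _ => mk_eq_of_subset ?_ hp⟩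
  rintro x rfl
  exact Equiv.swap_apply_left _ _

theorem IsPermClone.exists_mk_fiber_eq [Infinite X] (hC : IsPermClone C) {n : ℕ}
    {f : (Fin (n + 1) → X) → X} (hf : (⟨n, f⟩ : Ops X) ∈ C) {g : Fin (n + 1) → X → X}
    {J : Type u} [Nonempty J] (hJ : #J ≤ #X) {Z : J → Set X} (hZ : ∀ j, #(Z j) = #X) {y : J → X}
    (hfy : ∀ j, ∀ z ∈ Z j, f (fun i => g i z) = y j)
    (hg : ∀ i, (∀ j, InjOn (g i) (Z j)) ∨
      (∃ u p, unaryOp u ∈ C ∧ #(u ⁻¹' {p}) = #X) ∧ ∃ c, ∀ j, ∀ z ∈ Z j, g i z = c) :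
    ∃ u : X → X, unaryOp u ∈ C ∧ ∀ j, #(u ⁻¹' {y j}) = #X := by
  obtain ⟨j₀⟩ := ‹Nonempty J›
  have hJX : #(J × X) ≤ #X := mk_prod_le hJ
  have hsum : #((J × X) ⊕ X) ≤ #X := by
    rw [mk_sum, lift_id, lift_id, add_eq_right (aleph0_le_mk X) hJX]
  obtain ⟨z, hzZ, hz⟩ := exists_forall_injective_comp (aleph0_le_mk X) hsum
    (Z := fun t => Z (t.elim Prod.fst fun _ => j₀)) (fun _ => (hZ _).ge)
    (g := fun i : {i // ∀ j, InjOn (g i) (Z j)} => g i) fun i _ => i.2 _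
  have hlift : ∀ i, ∃ h : (J × X) ⊕ X → X,
      UnaryMem C h ∧ ∀ t, h (Sum.inl t) = g i (z (Sum.inl t)) := by
    intro i
    rcases hg i with hinj | ⟨⟨u, p, hu, hp⟩, c, hc⟩
    · obtain ⟨e, he⟩ := exists_equiv_extending_inl (hz ⟨i, hinj⟩)
      exact ⟨e, hC.isClone.unaryMem_equiv e, he⟩
    · obtain ⟨v, hv⟩ := hC.exists_unaryMem_sumElim_const hu hp hJX c
      exact ⟨_, hv, fun t => (hc _ _ (hzZ _)).symm⟩
  choose h hmem hh using hlift
  obtain ⟨e, he⟩ := hC.unaryMem_op hf hmem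
  refine ⟨_, he, fun j => ?_⟩
  rw [preimage_comp, mk_preimage_equiv]
  refine mk_eq_of_injective_of_forall_mem hsum (j := fun x => Sum.inl (j, x))
    (Sum.inl_injective.comp (Prod.mk_right_injective j)) fun x => ?_
  simp only [mem_preimage, hh, mem_singleton_iff]
  exact hfy j _ (hzZ (Sum.inl (j, x)))

theorem IsPermClone.exists_large_fiber (hC : IsPermClone C) (hreg : (#X).IsRegular)
    (hB : ¬ C ⊆ polymorphisms (smallFibers X)) :
    ∃ u p, unaryOp u ∈ C ∧ #(u ⁻¹' {p}) = #X := by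
  have : Infinite X := infinite_iff.2 hreg.aleph0_le
  obtain ⟨n, f, g, hf, hg, hgB⟩ := exists_mem_of_not_subset_polymorphisms hB
  simp only [smallFibers, mem_ofPred_eq, not_forall, not_lt] at hgB
  obtain ⟨y, hy⟩ := hgB
  obtain ⟨Z, hZy, hZ, hgZ⟩ :=
    exists_subset_forall_injOn_or_const hreg g ((mk_set_le _).antisymm hy)
  obtain ⟨u, hu, huy⟩ := hC.exists_mk_fiber_eq hf (g := g) (J := PUnit) (Z := fun _ => Z)
    (y := fun _ => y) (by simpa using one_le_aleph0.trans hreg.aleph0_le) (fun _ => hZ)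
    (fun _ z hz => hZy hz) fun i => (hgZ i).elim (fun h => Or.inl fun _ => h) fun ⟨c, hc⟩ =>
      absurd (mk_eq_of_subset hc hZ) (hg i c).ne
  exact ⟨u, y, hu, huy PUnit.unit⟩

theorem exists_option_of_injOn_or_const {Y T : Type u} {g : Y → T} {Z : Set Y}
    (h : InjOn g Z ∨ ∃ c, ∀ z ∈ Z, g z = c) :
    ∃ o : Option T, (o = none → InjOn g Z) ∧ ∀ c, o = some c → ∀ z ∈ Z, g z = c := by
  rcases h with hinj | ⟨c, hc⟩
  · exact ⟨none, fun _ => hinj, by simp⟩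
  · exact ⟨some c, by simp, by simpa using hc⟩

theorem exists_uniform_injOn_or_const (hreg : (#X).IsRegular) {ι : Type*} [Finite ι]
    {g : ι → X → X} (hg : ∀ i, g i ∈ fewLargeFibers X) {V : Set X} (hV : #V = #X)
    {Z : V → Set X} (hZ : ∀ y, #(Z y) = #X)
    (hgZ : ∀ y i, InjOn (g i) (Z y) ∨ ∃ c, ∀ z ∈ Z y, g i z = c) :
    ∃ V' : Set V, #V' = #X ∧
      ∀ i, (∀ y ∈ V', InjOn (g i) (Z y)) ∨ ∃ c, ∀ y ∈ V', ∀ z ∈ Z y, g i z = c := by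
  have : Infinite X := infinite_iff.2 hreg.aleph0_le
  -- `o y i` records the constant value of `g i` on `Z y`, if there is one.
  choose o hnone hsome using fun y i => exists_option_of_injOn_or_const (hgZ y i)
  obtain ⟨V', -, hV', ho⟩ := exists_subset_forall_injOn_or_const hreg (fun i y => o y i)
    (mk_univ.trans hV)
  refine ⟨V', hV', fun i => ?_⟩
  rcases ho i with hinj | ⟨(_ | c), hc⟩
  · have hsub : (fun y => o y i) '' V' ⊆ insert none (some '' {c | #(g i ⁻¹' {c}) = #X}) := by
      rintro _ ⟨y, -, rfl⟩
      rcases hy : o y i with _ | c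
      · exact Or.inl hy
      · exact Or.inr ⟨c, mk_eq_of_subset (hsome y i c hy) (hZ y), hy.symm⟩
    have hlt : #((fun y => o y i) '' V') < #X := by
      refine ((mk_le_mk_of_subset hsub).trans mk_insert_le).trans_lt ?_
      rw [mk_image_eq (Option.some_injective X)]
      exact add_lt_of_lt hreg.aleph0_le (hg i) (one_lt_aleph0.trans_le hreg.aleph0_le)
    exact absurd ((mk_image_eq_of_injOn _ _ hinj).trans hV') hlt.ne
  · exact Or.inl fun y hy => hnone y i (hc y hy)
  · exact Or.inr ⟨c, fun y hy => hsome y i c (hc y hy)⟩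

theorem IsPermClone.exists_many_large_fibers (hC : IsPermClone C) (hreg : (#X).IsRegular)
    (hA : ¬ C ⊆ polymorphisms (fewLargeFibers X)) (hB : ¬ C ⊆ polymorphisms (smallFibers X)) :
    ∃ u : X → X, unaryOp u ∈ C ∧ #{y | #(u ⁻¹' {y}) = #X} = #X := by
  have : Infinite X := infinite_iff.2 hreg.aleph0_le
  obtain ⟨n, f, g, hf, hg, hgA⟩ := exists_mem_of_not_subset_polymorphisms hA
  have hV := (mk_set_le _).antisymm (not_lt.1 hgA)
  choose Z hZy hZ hgZ using fun y : {y | #((fun x => f fun i => g i x) ⁻¹' {y}) = #X} =>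
    exists_subset_forall_injOn_or_const hreg g y.2
  obtain ⟨V', hV', hgV'⟩ := exists_uniform_injOn_or_const hreg hg hV hZ hgZ
  have : Nonempty V' := mk_ne_zero_iff.1 (by rw [hV']; exact mk_ne_zero X)
  have hheavy := hC.exists_large_fiber hreg hB
  obtain ⟨u, hu, huy⟩ := hC.exists_mk_fiber_eq hf (g := g) (J := V') (Z := fun y => Z y)
    (y := fun y => y.1) hV'.le (fun y => hZ y) (fun y z hz => hZy y hz) fun i =>
      (hgV' i).imp (fun h y => h y y.2) fun ⟨c, hc⟩ => ⟨hheavy, c, fun y => hc y y.2⟩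
  refine ⟨u, hu, mk_eq_of_subset (A := Subtype.val '' V') ?_ ?_⟩
  · rintro _ ⟨y, hy, rfl⟩
    exact huy ⟨y, hy⟩
  · rw [mk_image_eq Subtype.val_injective, hV']

theorem IsPermClone.unaryMem_fst_of_hasBoxDefect_zero [Infinite X] (hC : IsPermClone C)
    (hbox : HasBoxDefect C 0) {u : X → X} (hu : unaryOp u ∈ C)
    (hV : #{y | #(u ⁻¹' {y}) = #X} = #X) : UnaryMem C (Prod.fst : X × X → X) := by
  obtain ⟨n, f, D, hf, hD, hfD⟩ := hbox
  choose σ hσ using fun i => exists_perm_mapsTo_of_mk_compl (hD i) hV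
  have hT : #(Set.univ.pi D × X) ≤ #X :=
    mk_prod_le ((mk_set_le _).trans (mk_fin_arrow_le _))
  let L : Fin (n + 1) → (Set.univ.pi D × X) ⊕ X → X := fun i =>
    (σ i).symm ∘ Sum.elim (fun t => σ i (t.1.1 i)) u
  have hL : ∀ i, UnaryMem C (L i) := fun i =>
    ((UnaryMem.of_unaryOp_mem hu).sumElim hT fun t => hσ i (t.1.2 i trivial)).comp_left
      hC.isClone (hC.perm_mem (σ i).symm)
  have hF := hC.unaryMem_op hf hL
  refine hF.of_mk_fiber_eq fun y => ?_
  obtain ⟨d, hd, rfl⟩ : y ∈ f '' Set.univ.pi D :=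
    compl_empty_iff.1 (mk_set_eq_zero_iff.1 hfD) ▸ mem_univ y
  have hfst : #(Prod.fst ⁻¹' {f d} : Set (X × X)) = #X :=
    thickFibers_comp_fst le_rfl id (f d, f d)
  have hF_fiber : #((fun w => f fun i => L i w) ⁻¹' {f d}) = #X :=
    mk_eq_of_injective_of_forall_mem hF.mk_eq.le (j := fun x => Sum.inl (⟨d, hd⟩, x))
      (Sum.inl_injective.comp (Prod.mk_right_injective _)) fun x => by simp [L]
  rw [hfst, hF_fiber]

end LargeFibers

section ThickMembers

variable {C : Set (Ops X)} {W W' : Type u}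

/-- A member of `C` all of whose nonempty fibres have full size and whose range has a complement of
full size. The range of such a function can be transformed at will within `C`. -/
structure IsThickMember (C : Set (Ops X)) (k : W → X) : Prop where
  mem : UnaryMem C k
  thick : ThickFibers k
  mk_compl_range : #((range k)ᶜ : Set X) = #X

theorem UnaryMem.of_thickFibers_of_surjective [Infinite X]
    (hfst : UnaryMem C (Prod.fst : X × X → X)) {h : W → X} (hh : ThickFibers h)
    (hsurj : Surjective h) : UnaryMem C h :=
  hfst.of_thickFibers (thickFibers_comp_fst le_rfl id) hh
    (hsurj.range_eq.trans Prod.fst_surjective.range_eq.symm)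

theorem IsPermClone.unaryMem_comp_of_mk_compl_range [Infinite X] (hC : IsPermClone C)
    (hfst : UnaryMem C (Prod.fst : X × X → X)) {k : W → X} (hk : UnaryMem C k)
    (hco : #((range k)ᶜ : Set X) = #X) (u : X → X) : UnaryMem C (u ∘ k) := by
  have hj : Injective fun y => (u y, y) := fun y y' h => (Prod.ext_iff.1 h).2
  have hgraph : #(((fun y => (u y, y)) '' range k)ᶜ : Set (X × X)) = #X := by
    obtain ⟨y, hy⟩ := mk_ne_zero_iff.1 (hco ▸ mk_ne_zero X)
    refine mk_eq_of_injective_of_forall_mem (mk_prod_le le_rfl) (Prod.mk_left_injective y) ?_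
    rintro x ⟨_, hy', h⟩
    obtain rfl := (Prod.ext_iff.1 h).2
    exact hy hy'
  obtain ⟨e, he⟩ := exists_equiv_eqOn hj.injOn (hco.trans hgraph.symm)
  have hcomp := hk.comp_left hC.isClone ((hfst.comp_equiv e).unaryOp_mem hC)
  convert hcomp using 1
  funext w
  simp only [comp_apply, he (mem_range_self w)]

theorem IsPermClone.unaryMem_of_factorsThrough [Infinite X] (hC : IsPermClone C)
    (hfst : UnaryMem C (Prod.fst : X × X → X)) {k h : W → X} (hk : UnaryMem C k)
    (hco : #((range k)ᶜ : Set X) = #X) (hh : h.FactorsThrough k) : UnaryMem C h := by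
  rw [← hh.extend_comp id]
  exact hC.unaryMem_comp_of_mk_compl_range hfst hk hco _

theorem IsThickMember.const_mem [Infinite X] (hC : IsPermClone C)
    (hfst : UnaryMem C (Prod.fst : X × X → X)) {k : W → X} (hk : IsThickMember C k) (c : X) :
    unaryOp (fun _ : X => c) ∈ C := by
  have hconst : UnaryMem C fun _ : W => c :=
    hC.unaryMem_comp_of_mk_compl_range hfst hk.mem hk.mk_compl_range fun _ => c
  exact hconst.unaryOp_comp_mem hC (Classical.choice (Cardinal.eq.1 hk.mem.mk_eq.symm))

theorem IsThickMember.unaryMem_of_mk_range_le [Infinite X] (hC : IsPermClone C)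
    (hfst : UnaryMem C (Prod.fst : X × X → X)) {k : W → X} (hk : IsThickMember C k) [Nonempty W']
    {h : W' → X} (hh : ThickFibers h) (hle : #(range h) ≤ #(range k)) : UnaryMem C h := by
  obtain ⟨ψ⟩ := hle
  obtain ⟨w₀⟩ := ‹Nonempty W'›
  have hψ : Injective fun y => (ψ y : X) := Subtype.val_injective.comp ψ.injective
  let F : X → X := extend (fun y => (ψ y : X)) Subtype.val fun _ => h w₀
  have hF : ∀ y, F (ψ y) = y := fun y => hψ.extend_apply _ _ y
  have hFk : UnaryMem C (F ∘ k) :=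
    hC.unaryMem_comp_of_mk_compl_range hfst hk.mem hk.mk_compl_range F
  refine hFk.of_thickFibers (hk.thick.comp_left hk.mem.mk_eq F) hh (Subset.antisymm ?_ ?_)
  · rintro _ ⟨w, rfl⟩
    obtain ⟨w', hw'⟩ := (ψ ⟨h w, w, rfl⟩).2
    exact ⟨w', by rw [comp_apply, hw', hF]⟩
  · rintro _ ⟨w, rfl⟩
    by_cases hw : ∃ y, (ψ y : X) = k w
    · obtain ⟨y, hy⟩ := hw
      rw [comp_apply, ← hy, hF]
      exact y.2
    · exact ⟨w₀, (extend_apply' Subtype.val (fun _ => h w₀) (k w) hw).symm⟩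

theorem IsPermClone.exists_isThickMember_range_eq [Infinite X] (hC : IsPermClone C) {n : ℕ}
    {f : (Fin (n + 1) → X) → X} (hf : (⟨n, f⟩ : Ops X) ∈ C) {D : Set (Fin (n + 1) → X)}
    (hD : ∀ i, UnaryMem C fun p : D × X => p.1.1 i) (hco : #((f '' D)ᶜ : Set X) = #X) :
    ∃ (W : Type u) (k : W → X), IsThickMember C k ∧ range k = f '' D := by
  have hrange : range (fun p : D × X => f p.1) = f '' D := by
    rw [image_eq_range]
    exact Prod.fst_surjective.range_comp fun d : D => f d
  exact ⟨_, _, ⟨hC.unaryMem_op hf hD,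
    thickFibers_comp_fst ((mk_set_le _).trans (mk_fin_arrow_le _)) fun d : D => f d,
    by rw [hrange, hco]⟩, hrange⟩

theorem unaryMem_coordinate_of_surjOn [Infinite X] (hfst : UnaryMem C (Prod.fst : X × X → X))
    {n : ℕ} {D : Set (Fin (n + 1) → X)} {i : Fin (n + 1)} (hD : SurjOn (fun x => x i) D univ) :
    UnaryMem C fun p : D × X => p.1.1 i := by
  refine hfst.of_thickFibers_of_surjective
    (thickFibers_comp_fst ((mk_set_le _).trans (mk_fin_arrow_le _)) fun d : D => d.1 i) fun y => ?_
  obtain ⟨x, hx, rfl⟩ := hD (mem_univ y)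
  exact ⟨(⟨x, hx⟩, x i), rfl⟩

theorem exists_mk_lt_forall_surjOn_union [Infinite X] {n : ℕ} {D : Set (Fin (n + 1) → X)}
    {s : Set (Fin (n + 1))} {c : Fin (n + 1) → X}
    (hsmall : ∀ i ∉ s, #(((fun x => x i) '' D)ᶜ : Set X) < #X) :
    ∃ Q : Set (Fin (n + 1) → X), #Q < #X ∧ (∀ i ∈ s, ∀ x ∈ Q, x i = c i) ∧
      ∀ i ∉ s, SurjOn (fun x => x i) (D ∪ Q) univ := by
  classical
  let d : X → Fin (n + 1) → X := fun y i => if i ∈ s then c i else y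
  let A : Fin (n + 1) → Set X := fun i => {y | i ∉ s ∧ y ∉ (fun x => x i) '' D}
  have hA : ∀ i, #(A i) < #X := by
    intro i
    by_cases hi : i ∈ s
    · have : IsEmpty (A i) := ⟨fun y => y.2.1 hi⟩
      rw [mk_eq_zero (A i)]
      exact pos_iff_ne_zero.2 (mk_ne_zero X)
    · exact (mk_le_mk_of_subset fun y hy => hy.2).trans_lt (hsmall i hi)
  refine ⟨d '' ⋃ i, A i, mk_image_le.trans_lt (mk_iUnion_fin_lt hA), ?_, fun i hi y _ => ?_⟩
  · rintro i hi _ ⟨y, -, rfl⟩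
    exact if_pos hi
  · by_cases hy : y ∈ (fun x => x i) '' D
    · exact image_mono subset_union_left hy
    · exact ⟨d y, Or.inr ⟨y, mem_iUnion.2 ⟨i, hi, hy⟩, rfl⟩, if_neg hi⟩

theorem IsPermClone.exists_isThickMember_image_subset_range [Infinite X] (hC : IsPermClone C)
    (hfst : UnaryMem C (Prod.fst : X × X → X)) {n : ℕ} {f : (Fin (n + 1) → X) → X}
    (hf : (⟨n, f⟩ : Ops X) ∈ C) {D : Set (Fin (n + 1) → X)} {d₀ : Fin (n + 1) → X} (hd₀ : d₀ ∈ D)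
    {s : Set (Fin (n + 1))} (hs : ∀ i ∈ s, unaryOp (fun _ : X => d₀ i) ∈ C ∧ ∀ x ∈ D, x i = d₀ i)
    (hsmall : ∀ i ∉ s, #(((fun x => x i) '' D)ᶜ : Set X) < #X)
    (hco : #((f '' D)ᶜ : Set X) = #X) :
    ∃ (W : Type u) (k : W → X), IsThickMember C k ∧ f '' D ⊆ range k := by
  obtain ⟨Q, hQ, hQs, hsurj⟩ := exists_mk_lt_forall_surjOn_union (c := d₀) hsmall
  have hcoQ : #((f '' (D ∪ Q))ᶜ : Set X) = #X := by
    rw [image_union, compl_union]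
    exact mk_diff_eq_of_lt hco (mk_image_le.trans_lt hQ)
  suffices hcoord : ∀ i, UnaryMem C fun p : ↥(D ∪ Q) × X => p.1.1 i by
    obtain ⟨W, k, hk, hkD⟩ := hC.exists_isThickMember_range_eq hf hcoord hcoQ
    exact ⟨W, k, hk, hkD ▸ image_mono subset_union_left⟩
  intro i
  by_cases hi : i ∈ s
  · obtain ⟨hmem, hD⟩ := hs i hi
    have hconst : (fun p : ↥(D ∪ Q) × X => p.1.1 i) = fun _ => d₀ i :=
      funext fun p => p.1.2.elim (hD _) (hQs i hi _)
    have : Nonempty ↥(D ∪ Q) := ⟨⟨d₀, Or.inl hd₀⟩⟩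
    obtain ⟨e⟩ := nonempty_equiv_prod (X := X) (D := ↥(D ∪ Q))
      ((mk_set_le _).trans (mk_fin_arrow_le _))
    rw [hconst]
    exact (UnaryMem.of_unaryOp_mem hmem).comp_equiv e.symm
  · exact unaryMem_coordinate_of_surjOn hfst (hsurj i hi)

theorem IsPermClone.exists_isThickMember_range_subset [Infinite X] (hC : IsPermClone C)
    (hfst : UnaryMem C (Prod.fst : X × X → X)) {n : ℕ} {f : (Fin (n + 1) → X) → X}
    (hf : (⟨n, f⟩ : Ops X) ∈ C) {g : Fin (n + 1) → X → X} {s : Set (Fin (n + 1))}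
    (hs : ∀ i ∈ s, (∀ c : X, unaryOp (fun _ : X => c) ∈ C) ∧ ∀ x y, g i x = g i y)
    (hsmall : ∀ i ∉ s, g i ∈ almostSurjective X)
    (hco : (fun x => f fun i => g i x) ∉ almostSurjective X) :
    ∃ (W : Type u) (k : W → X), IsThickMember C k ∧
      range (fun x => f fun i => g i x) ⊆ range k := by
  obtain ⟨x₀⟩ := (inferInstance : Nonempty X)
  have himage : f '' range (fun x i => g i x) = range fun x => f fun i => g i x :=
    (range_comp f fun x i => g i x).symm
  rw [← himage]
  refine hC.exists_isThickMember_image_subset_range hfst hf (mem_range_self x₀) (s := s)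
    (fun i hi => ⟨(hs i hi).1 _, ?_⟩) (fun i hi => ?_) ?_
  · rintro _ ⟨x, rfl⟩
    exact (hs i hi).2 x x₀
  · rw [← range_comp]
    exact hsmall i hi
  · rw [himage]
    exact (mk_set_le _).antisymm (not_lt.1 hco)

theorem IsPermClone.exists_nonconstant_isThickMember [Infinite X] (hC : IsPermClone C)
    (hfst : UnaryMem C (Prod.fst : X × X → X)) (hE : ¬ C ⊆ polymorphisms (almostSurjective X))
    (hF : ¬ C ⊆ polymorphisms (almostSurjectiveOrConst X)) :
    ∃ (W : Type u) (k : W → X), IsThickMember C k ∧ ∃ w w', k w ≠ k w' := by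
  obtain ⟨n, f, g, hf, hg, hgE⟩ := exists_mem_of_not_subset_polymorphisms hE
  obtain ⟨W, k, hk, -⟩ := hC.exists_isThickMember_range_subset hfst hf (s := ∅)
    (fun i hi => absurd hi (notMem_empty i)) (fun i _ => hg i) hgE
  obtain ⟨n, f, g, hf, hg, hgF⟩ := exists_mem_of_not_subset_polymorphisms hF
  obtain ⟨hgE, hne⟩ := not_or.1 hgF
  obtain ⟨W', k', hk', hsub⟩ := hC.exists_isThickMember_range_subset hfst hf
    (s := {i | ∀ x y, g i x = g i y}) (fun i hi => ⟨hk.const_mem hC hfst, hi⟩)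
    (fun i hi => (hg i).resolve_right hi) hgE
  push Not at hne
  obtain ⟨x, y, hxy⟩ := hne
  obtain ⟨w, hw⟩ := hsub ⟨x, rfl⟩
  obtain ⟨w', hw'⟩ := hsub ⟨y, rfl⟩
  exact ⟨W', k', hk', w, w', by rwa [hw, hw']⟩

end ThickMembers

section RowsAndColumns

variable {C : Set (Ops X)}

theorem exists_injOn_and_const_of_mk_range_eq (hreg : (#X).IsRegular) {ι : Type*} [Finite ι]
    {F : X → X} (hF : #(range F) = #X) (g : ι → X → X) :
    ∃ Z : Set X, #Z = #X ∧ InjOn F Z ∧ ∀ i, #(range (g i)) < #X → ∃ c, ∀ z ∈ Z, g i z = c := by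
  obtain ⟨Z₀, -, hZ₀, hF₀⟩ := exists_subset_injOn_mk_eq F (Z := univ) mk_univ
    (by rw [image_univ, hF])
  obtain ⟨Z, hZsub, hZ, hg⟩ := exists_subset_forall_injOn_or_const hreg g hZ₀
  refine ⟨Z, hZ, hF₀.mono hZsub, fun i hi => (hg i).resolve_left fun hinj => ?_⟩
  have hsmall := (mk_le_mk_of_subset (image_subset_range (g i) Z)).trans_lt hi
  rw [mk_image_eq_of_injOn _ _ hinj, hZ] at hsmall
  exact hsmall.false

theorem exists_injective_of_not_subset_smallRowsOrColumns (hreg : (#X).IsRegular)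
    (hT : ¬ C ⊆ polymorphisms (smallRowsOrColumns X)) :
    ∃ (n : ℕ) (f : (Fin (n + 1) → X) → X) (d : X ⊕ X → Fin (n + 1) → X), (⟨n, f⟩ : Ops X) ∈ C ∧
      Injective (f ∘ d) ∧ #((range (f ∘ d))ᶜ : Set X) = #X ∧
      ∀ i, (∃ c, ∀ x, d (Sum.inl x) i = c) ∨ ∃ c, ∀ x, d (Sum.inr x) i = c := by
  obtain ⟨n, f, t, hf, ht, hft⟩ := exists_mem_of_not_subset_polymorphisms hT
  simp only [smallRowsOrColumns, mem_ofPred_eq, not_or, not_forall, not_lt] at hft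
  obtain ⟨⟨a, ha⟩, b, hb⟩ := hft
  obtain ⟨Y₁, hY₁, hinj₁, hconst₁⟩ := exists_injOn_and_const_of_mk_range_eq hreg
    ((mk_set_le _).antisymm ha) fun i y => t i (a, y)
  obtain ⟨Y₂, hY₂, hinj₂, hconst₂⟩ := exists_injOn_and_const_of_mk_range_eq hreg
    ((mk_set_le _).antisymm hb) fun i x => t i (x, b)
  let row : X → X := fun y => f fun i => t i (a, y)
  let column : X → X := fun x => f fun i => t i (x, b)
  have hJ : #((X ⊕ X) ⊕ X) ≤ #X := by
    simp only [mk_sum, lift_id, add_eq_self hreg.aleph0_le, le_refl]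
  obtain ⟨z, hzmem, hz⟩ := exists_forall_injective_comp (ι := Unit) hreg.aleph0_le hJ
    (Z := Sum.elim (Sum.elim (fun _ => row '' Y₁) fun _ => column '' Y₂) fun _ => univ)
    (by
      rintro ((_ | _) | _)
      · exact (hY₁.symm.trans (mk_image_eq_of_injOn _ _ hinj₁).symm).le
      · exact (hY₂.symm.trans (mk_image_eq_of_injOn _ _ hinj₂).symm).le
      · exact mk_univ.ge)
    (g := fun _ => id) fun _ _ => injOn_id _
  choose y₁ hy₁ hz₁ using fun x => hzmem (Sum.inl (Sum.inl x))
  choose y₂ hy₂ hz₂ using fun x => hzmem (Sum.inl (Sum.inr x))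
  let d : X ⊕ X → Fin (n + 1) → X :=
    Sum.elim (fun x i => t i (a, y₁ x)) fun x i => t i (y₂ x, b)
  have hfd : f ∘ d = z ∘ Sum.inl := by
    funext s
    rcases s with x | x
    · exact hz₁ x
    · exact hz₂ x
  have hzinj : Injective z := hz ()
  refine ⟨n, f, d, hf, ?_, ?_, fun i => ?_⟩
  · rw [hfd]
    exact hzinj.comp Sum.inl_injective
  · rw [hfd]
    exact mk_compl_range_inl_of_injective hzinj
  · rcases ht i with hrow | hcolumn
    · obtain ⟨c, hc⟩ := hconst₁ i (hrow a)
      exact Or.inl ⟨c, fun x => hc _ (hy₁ x)⟩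
    · obtain ⟨c, hc⟩ := hconst₂ i (hcolumn b)
      exact Or.inr ⟨c, fun x => hc _ (hy₂ x)⟩

theorem IsThickMember.exists_isThickMember_range_eq_union [Infinite X] (hC : IsPermClone C)
    (hfst : UnaryMem C (Prod.fst : X × X → X)) {W : Type u} {k : W → X} (hk : IsThickMember C k)
    {w w' : W} (hww' : k w ≠ k w') {n : ℕ} {f : (Fin (n + 1) → X) → X}
    (hf : (⟨n, f⟩ : Ops X) ∈ C) {i : Fin (n + 1)} {a b : X} {K : Set X}
    (hK : K ⊆ f '' {x | x i = b}) (hco : #((f '' {x | x i = a} ∪ K)ᶜ : Set X) = #X) :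
    ∃ (W' : Type u) (k' : W' → X), IsThickMember C k' ∧ range k' = f '' {x | x i = a} ∪ K := by
  classical
  let D : Set (Fin (n + 1) → X) := {x | x i = a} ∪ {x | x i = b ∧ f x ∈ K}
  have hfD : f '' D = f '' {x | x i = a} ∪ K := by
    refine (image_union _ _ _).trans (congrArg _ (Subset.antisymm ?_ fun y hy => ?_))
    · rintro _ ⟨x, hx, rfl⟩
      exact hx.2
    · obtain ⟨x, hx, rfl⟩ := hK hy
      exact ⟨x, ⟨hx, hy⟩, rfl⟩
  rw [← hfD] at hco ⊢
  refine hC.exists_isThickMember_range_eq hf (fun j => ?_) hco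
  rcases eq_or_ne j i with rfl | hji
  · have : Nonempty (D × X) := ⟨(⟨fun _ => a, Or.inl rfl⟩, a)⟩
    have hpair : range (fun p : D × X => p.1.1 j) ⊆ {a, b} := by
      rintro _ ⟨⟨⟨x, hx | hx⟩, _⟩, rfl⟩
      · exact Or.inl hx
      · exact Or.inr hx.1
    refine hk.unaryMem_of_mk_range_le hC hfst (thickFibers_comp_fst
      ((mk_set_le _).trans (mk_fin_arrow_le _)) fun d : D => d.1 j) ?_
    calc #(range fun p : D × X => p.1.1 j)
        ≤ #({a, b} : Set X) := mk_le_mk_of_subset hpair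
      _ ≤ 2 := mk_insert_le.trans (by rw [mk_singleton, one_add_one_eq_two])
      _ ≤ #(range k) := two_le_iff.2
          ⟨⟨k w, w, rfl⟩, ⟨k w', w', rfl⟩, fun h => hww' (congrArg Subtype.val h)⟩
  · refine unaryMem_coordinate_of_surjOn hfst fun y _ => ?_
    exact ⟨update (fun _ => a) j y, Or.inl (update_of_ne hji.symm _ _), update_self _ _ _⟩

theorem IsThickMember.exists_isThickMember_mk_range_eq_of_disjoint [Infinite X]
    (hC : IsPermClone C) (hfst : UnaryMem C (Prod.fst : X × X → X)) {W : Type u} {k : W → X}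
    (hk : IsThickMember C k) {w w' : W} (hww' : k w ≠ k w') {n : ℕ} {f : (Fin (n + 1) → X) → X}
    (hf : (⟨n, f⟩ : Ops X) ∈ C) {i : Fin (n + 1)} {a b : X} {B : Set X}
    (hdisj : Disjoint B (f '' {x | x i = a})) (hB : #B = #X) (hb : #(f '' {x | x i = b}) = #X) :
    ∃ (W' : Type u) (k' : W' → X), IsThickMember C k' ∧ #(range k') = #X := by
  rcases (mk_set_le (f '' {x | x i = a})).eq_or_lt with hlarge | hlt
  · obtain ⟨W', k', hk', hrange⟩ := hk.exists_isThickMember_range_eq_union hC hfst hww' hf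
      (i := i) (a := a) (b := a) (empty_subset _)
      (by rw [union_empty]; exact mk_compl_eq_of_disjoint hdisj hB)
    exact ⟨W', k', hk', by rw [hrange, union_empty, hlarge]⟩
  · obtain ⟨K, hKb, hK, hKdiff⟩ := exists_subset_mk_eq_mk_diff_eq ((aleph0_le_mk X).trans hb.ge)
    rw [hb] at hK hKdiff
    obtain ⟨W', k', hk', hrange⟩ := hk.exists_isThickMember_range_eq_union hC hfst hww' hf hKb
      (a := a) <| mk_eq_of_subset (fun y hy => not_or.2 ⟨hy.2, hy.1.2⟩)
        (mk_diff_eq_of_lt hKdiff hlt)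
    exact ⟨W', k', hk', mk_eq_of_subset (hrange ▸ subset_union_right) hK⟩

theorem IsThickMember.exists_isThickMember_mk_range_eq [Infinite X] (hC : IsPermClone C)
    (hfst : UnaryMem C (Prod.fst : X × X → X)) {W : Type u} {k : W → X} (hk : IsThickMember C k)
    {w w' : W} (hww' : k w ≠ k w') {n : ℕ} {f : (Fin (n + 1) → X) → X}
    (hf : (⟨n, f⟩ : Ops X) ∈ C) (hfib : ∀ i, ∃ b, #(f '' {x | x i = b}) = #X) :
    ∃ (W' : Type u) (k' : W' → X), IsThickMember C k' ∧ #(range k') = #X := by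
  have hrange : #(range f) = #X := by
    obtain ⟨b, hb⟩ := hfib 0
    exact mk_eq_of_subset (image_subset_range _ _) hb
  obtain ⟨A, B, hAB, hdisj, hA, hB⟩ :=
    exists_disjoint_union_mk_eq ((aleph0_le_mk X).trans hrange.ge)
  rw [hrange] at hA hB
  by_cases hsmall : ∀ i, #(((fun x => x i) '' (f ⁻¹' B))ᶜ : Set X) < #X
  · have hfB : f '' (f ⁻¹' B) = B := image_preimage_eq_of_subset (hAB ▸ subset_union_right)
    obtain ⟨y, hy⟩ := mk_ne_zero_iff.1 (hB ▸ mk_ne_zero X)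
    obtain ⟨x, rfl⟩ : y ∈ range f := hAB ▸ Or.inr hy
    obtain ⟨W', k', hk', hsub⟩ := hC.exists_isThickMember_image_subset_range hfst hf
      (show x ∈ f ⁻¹' B from hy) (s := ∅) (fun i hi => absurd hi (notMem_empty i))
      (fun i _ => hsmall i) (by rw [hfB]; exact mk_compl_eq_of_disjoint hdisj hA)
    exact ⟨W', k', hk', mk_eq_of_subset (hfB ▸ hsub) hB⟩
  · push Not at hsmall
    obtain ⟨i, hi⟩ := hsmall
    obtain ⟨a, ha⟩ := mk_ne_zero_iff.1 ((mk_ne_zero X).bot_lt.trans_le hi).ne'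
    obtain ⟨b, hb⟩ := hfib i
    refine hk.exists_isThickMember_mk_range_eq_of_disjoint hC hfst hww' hf (a := a)
      (disjoint_right.2 ?_) hB hb
    rintro _ ⟨x, hx, rfl⟩ hxB
    exact ha ⟨x, hxB, hx⟩

end RowsAndColumns

section UnaryOperations

variable {C : Set (Ops X)}

theorem thickFibers_sumElim [Infinite X] {T D : Type u} (hT : #T ≤ #X) (hD : #D ≤ #X) {v : T → X}
    {q : D → X} (h : ∀ t, ∃ d, q d = v t) : ThickFibers (Sum.elim v fun p : D × X => q p.1) := by
  have hle : #(T ⊕ D × X) ≤ #X := by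
    rw [mk_sum, lift_id, lift_id]
    exact add_le_of_le (aleph0_le_mk X) hT (mk_prod_le hD)
  have hfib : ∀ d, #(Sum.elim v (fun p : D × X => q p.1) ⁻¹' {q d}) = #X := fun d =>
    mk_eq_of_injective_of_forall_mem hle (Sum.inr_injective.comp (Prod.mk_right_injective d))
      fun _ => rfl
  rintro (t | ⟨d, _⟩)
  · obtain ⟨d, hd⟩ := h t
    rw [Sum.elim_inl, ← hd]
    exact hfib d
  · exact hfib d

theorem exists_subset_forall_exists_notMem [Infinite X] {T : Type u} {g : X → T} {Z : Set X}
    (hZ : #Z = #X) (h : ∀ z ∈ Z, ∃ x, g x = g z ∧ x ≠ z) :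
    ∃ Z' ⊆ Z, #Z' = #X ∧ ∀ z ∈ Z', ∃ x ∉ Z', g x = g z := by
  obtain ⟨S, hS, hgS⟩ := exists_subset_bijOn Z g
  rcases (mk_set_le S).eq_or_lt with hlarge | hlt
  · refine ⟨S, hS, hlarge, fun z hz => ?_⟩
    obtain ⟨x, hxz, hne⟩ := h z (hS hz)
    exact ⟨x, fun hx => hne (hgS.injOn hx hz hxz), hxz⟩
  · refine ⟨Z \ S, sdiff_subset, mk_diff_eq_of_lt hZ hlt, fun z hz => ?_⟩
    obtain ⟨x, hx, hxz⟩ := hgS.surjOn (mem_image_of_mem g hz.1)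
    exact ⟨x, fun hxS => hxS.2 hx, hxz⟩

theorem exists_of_not_subset_fewSingletonFibers [Infinite X]
    (hN : ¬ C ⊆ polymorphisms (fewSingletonFibers X)) :
    ∃ (n : ℕ) (f : (Fin (n + 1) → X) → X) (g : Fin (n + 1) → X → X) (Z : Set X),
      (⟨n, f⟩ : Ops X) ∈ C ∧ #Z = #X ∧
      (∀ z ∈ Z, ∀ x, (f fun i => g i x) = (f fun i => g i z) → x = z) ∧
      ∀ i, ∀ z ∈ Z, ∃ x ∉ Z, g i x = g i z := by
  obtain ⟨n, f, g, hf, hg, hgN⟩ := exists_mem_of_not_subset_polymorphisms hN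
  let S : Set X := {z | ∀ x, (f fun i => g i x) = (f fun i => g i z) → x = z}
  have hS : #S = #X := (mk_set_le _).antisymm (not_lt.1 hgN)
  obtain ⟨Z, -, ⟨hZsub, hZ⟩, hgZ⟩ := exists_subset_forall_of_antitone
    (L := fun Z => Z ⊆ S \ ⋃ i, {z | ∀ x, g i x = g i z → x = z} ∧ #Z = #X)
    (P := fun i Z => ∀ z ∈ Z, ∃ x ∉ Z, g i x = g i z)
    (fun i Z Z' hsub h z hz => (h z (hsub hz)).imp fun x hx => ⟨fun hxZ => hx.1 (hsub hxZ), hx.2⟩)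
    (fun i Z ⟨hZsub, hZ⟩ => by
      obtain ⟨Z', hZ'Z, hZ', hout⟩ := exists_subset_forall_exists_notMem (g := g i) hZ
        fun z hz => by
          by_contra! hsingle
          exact (hZsub hz).2 (mem_iUnion.2 ⟨i, hsingle⟩)
      exact ⟨Z', hZ'Z, ⟨hZ'Z.trans hZsub, hZ'⟩, hout⟩)
    ⟨Subset.rfl, mk_diff_eq_of_lt hS (mk_iUnion_fin_lt hg)⟩
  exact ⟨n, f, g, Z, hf, hZ, fun z hz => (hZsub hz).1, hgZ⟩

theorem IsPermClone.unaryMem_sumElim_const [Infinite X] (hC : IsPermClone C)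
    (hfst : UnaryMem C (Prod.fst : X × X → X))
    (hthick : ∀ {W : Type u} [Nonempty W] {h : W → X}, ThickFibers h → UnaryMem C h)
    (hN : ¬ C ⊆ polymorphisms (fewSingletonFibers X)) (v : X → X) (c : X) :
    UnaryMem C (Sum.elim v fun _ : X => c) := by
  obtain ⟨n, f, g, Z, hf, hZ, hsingle, hout⟩ := exists_of_not_subset_fewSingletonFibers hN
  let k : X → X := fun x => f fun i => g i x
  obtain ⟨A, B, rfl, hdisj, hA, hB⟩ := exists_disjoint_union_mk_eq ((aleph0_le_mk X).trans hZ.ge)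
  rw [hZ] at hA hB
  have : Nonempty ↥(A ∪ B)ᶜ := by
    obtain ⟨z, hz⟩ := mk_ne_zero_iff.1 (hA ▸ mk_ne_zero X)
    obtain ⟨x, hx, -⟩ := hout 0 z (Or.inl hz)
    exact ⟨x, hx⟩
  -- `A` is kept, `B` is dropped to leave room in the range, and the other points are multiplied
  -- so that every `g i` becomes thick while the points of `A` remain singleton fibres of `k`.
  let K : A ⊕ ↥(A ∪ B)ᶜ × X → X := Sum.elim (fun z => k z) fun p => k p.1
  have hK : UnaryMem C K := by
    have hg : ∀ i, UnaryMem C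
        (Sum.elim (fun z : A => g i z) fun p : ↥(A ∪ B)ᶜ × X => g i p.1) := fun i =>
      hthick <| thickFibers_sumElim (v := fun z : A => g i z) (q := fun d : ↥(A ∪ B)ᶜ => g i d)
        (mk_set_le A) (mk_set_le (A ∪ B)ᶜ) fun z =>
        have ⟨x, hx, hxz⟩ := hout i z (Or.inl z.2)
        ⟨⟨x, hx⟩, hxz⟩
    convert hC.unaryMem_op hf hg using 1
    funext w
    rcases w with z | p <;> rfl
  have hKco : #((range K)ᶜ : Set X) = #X := by
    have hkB : InjOn k B := fun z _ z' hz' h => hsingle z' (Or.inr hz') z h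
    refine mk_eq_of_subset ?_ ((mk_image_eq_of_injOn k B hkB).trans hB)
    rintro _ ⟨z, hz, rfl⟩ ⟨z' | p, h⟩
    · exact disjoint_left.1 hdisj z'.2 (hsingle z (Or.inr hz) z' h ▸ hz)
    · exact p.1.2 (hsingle z (Or.inr hz) p.1 h ▸ Or.inr hz)
  obtain ⟨eA⟩ := Cardinal.eq.1 hA
  obtain ⟨eB⟩ := nonempty_equiv_prod (mk_set_le (A ∪ B)ᶜ)
  have hfactor : (Sum.elim (v ∘ eA) fun _ => c).FactorsThrough K := by
    rintro (z | p) (z' | p') h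
    · exact congrArg (v ∘ eA) (Subtype.ext (hsingle z' (Or.inl z'.2) z h))
    · exact absurd (hsingle z (Or.inl z.2) p'.1 h.symm ▸ Or.inl z.2) p'.1.2
    · exact absurd (hsingle z' (Or.inl z'.2) p.1 h ▸ Or.inl z'.2) p.1.2
    · rfl
  have hmem := (hC.unaryMem_of_factorsThrough hfst hK hKco hfactor).comp_equiv
    (Equiv.sumCongr eA.symm eB)
  convert hmem using 1
  funext w
  rcases w with x | x <;> simp

theorem IsPermClone.unaryOp_mem_of_injective [Infinite X] (hC : IsPermClone C)
    (hfst : UnaryMem C (Prod.fst : X × X → X))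
    (hconst : ∀ (v : X → X) (c : X), UnaryMem C (Sum.elim v fun _ : X => c)) {n : ℕ}
    {f : (Fin (n + 1) → X) → X} (hf : (⟨n, f⟩ : Ops X) ∈ C) {d : X ⊕ X → Fin (n + 1) → X}
    (hinj : Injective (f ∘ d)) (hco : #((range (f ∘ d))ᶜ : Set X) = #X)
    (hd : ∀ i, (∃ c, ∀ x, d (Sum.inl x) i = c) ∨ ∃ c, ∀ x, d (Sum.inr x) i = c) (F : X → X) :
    unaryOp F ∈ C := by
  have hcoord : ∀ i, UnaryMem C fun w => d w i := by
    intro i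
    rcases hd i with ⟨c, hc⟩ | ⟨c, hc⟩
    · convert (hconst (fun x => d (Sum.inr x) i) c).comp_equiv (Equiv.sumComm X X) using 1
      funext w
      rcases w with x | x <;> simp [hc]
    · convert hconst (fun x => d (Sum.inl x) i) c using 1
      funext w
      rcases w with x | x <;> simp [hc]
  have hfd : UnaryMem C (f ∘ d) := hC.unaryMem_op hf hcoord
  obtain ⟨e⟩ := Cardinal.eq.1 hfd.mk_eq
  have hFe := hC.unaryMem_of_factorsThrough hfst hfd hco (hinj.factorsThrough (F ∘ e))
  convert hFe.unaryOp_comp_mem hC e.symm using 2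
  simp [comp_assoc]

theorem IsPermClone.forall_unaryOp_mem (hC : IsPermClone C) (hreg : (#X).IsRegular)
    (hA : ¬ C ⊆ polymorphisms (fewLargeFibers X)) (hB : ¬ C ⊆ polymorphisms (smallFibers X))
    (hE : ¬ C ⊆ polymorphisms (almostSurjective X))
    (hF : ¬ C ⊆ polymorphisms (almostSurjectiveOrConst X))
    (hN : ¬ C ⊆ polymorphisms (fewSingletonFibers X))
    (hT : ¬ C ⊆ polymorphisms (smallRowsOrColumns X))
    (hdefect : ∀ l : Cardinal.{u}, 1 ≤ l → l ≤ #X → ¬ C ⊆ defectClone X l) (G : X → X) :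
    unaryOp G ∈ C := by
  have : Infinite X := infinite_iff.2 hreg.aleph0_le
  obtain ⟨u, hu, hlarge⟩ := hC.exists_many_large_fibers hreg hA hB
  have hfst := hC.unaryMem_fst_of_hasBoxDefect_zero (hC.hasBoxDefect_zero hdefect) hu hlarge
  obtain ⟨W, k, hk, w, w', hww'⟩ := hC.exists_nonconstant_isThickMember hfst hE hF
  obtain ⟨n, f, d, hf, hinj, hco, hd⟩ := exists_injective_of_not_subset_smallRowsOrColumns hreg hT
  have hfib : ∀ i, ∃ b, #(f '' {x | x i = b}) = #X := by
    intro i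
    rcases hd i with ⟨c, hc⟩ | ⟨c, hc⟩
    · exact ⟨c, mk_eq_of_injective_of_forall_mem le_rfl (hinj.comp Sum.inl_injective)
        fun x => ⟨_, hc x, rfl⟩⟩
    · exact ⟨c, mk_eq_of_injective_of_forall_mem le_rfl (hinj.comp Sum.inr_injective)
        fun x => ⟨_, hc x, rfl⟩⟩
  obtain ⟨W', k', hk', hrange⟩ := hk.exists_isThickMember_mk_range_eq hC hfst hww' hf hfib
  have hthick : ∀ {W : Type u} [Nonempty W] {h : W → X}, ThickFibers h → UnaryMem C h :=
    fun hh => hk'.unaryMem_of_mk_range_le hC hfst hh ((mk_set_le _).trans hrange.ge)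
  exact hC.unaryOp_mem_of_injective hfst (hC.unaryMem_sumElim_const hfst hthick hN) hf hinj hco hd G

end UnaryOperations

section ColargeRange

variable {C : Set (Ops X)}

variable (X) in
/-- The operations that miss as many values as `X` has elements. A clone containing them lies in
none of the six polymorphism clones, and is everything once it contains all unary operations. -/
def colargeRangeOps : Set (Ops X) :=
  {f | #((range f.2)ᶜ : Set X) = #X}

theorem unaryOp_mem_colargeRangeOps {F : X → X} :
    unaryOp F ∈ colargeRangeOps X ↔ #((range F)ᶜ : Set X) = #X := by
  have hrange : range (unaryOp F).2 = range F :=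
    Surjective.range_comp (f := fun x : Fin 1 → X => x 0) (fun a => ⟨fun _ => a, rfl⟩) F
  rw [colargeRangeOps, mem_ofPred_eq, hrange]

theorem exists_injective_mem_colargeRangeOps [Infinite X] (n : ℕ) :
    ∃ g : (Fin (n + 1) → X) → X, Injective g ∧ (⟨n, g⟩ : Ops X) ∈ colargeRangeOps X :=
  exists_injective_mk_compl_range (mk_fin_arrow_le _)

theorem IsClone.eq_univ_of_colargeRangeOps_subset [Infinite X] (hC : IsClone C)
    (hunary : ∀ F : X → X, unaryOp F ∈ C) (h : colargeRangeOps X ⊆ C) : C = Set.univ := by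
  refine eq_univ_of_forall fun ⟨n, F⟩ => ?_
  obtain ⟨g, hg, hgco⟩ := exists_injective_mem_colargeRangeOps (X := X) n
  have hcomp := hC.2 0 n _ (hunary (F ∘ invFun g)) (fun _ => g) fun _ => h hgco
  convert hcomp using 2
  funext x
  exact congrArg F (leftInverse_invFun hg x).symm

theorem thickFibers_fst_equiv [Infinite X] {D : Type u} (hD : #D ≤ #X) (e : X ≃ D × X)
    (q : D → X) : ThickFibers fun x => q (e x).1 := fun x =>
  (mk_preimage_equiv e ((fun p : D × X => q p.1) ⁻¹' {q (e x).1})).trans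
    (thickFibers_comp_fst hD q (e x))

theorem exists_thickFibers_range_eq [Infinite X] {R : Set X} (hR : R.Nonempty) :
    ∃ F : X → X, ThickFibers F ∧ range F = R := by
  have := hR.to_subtype
  obtain ⟨e⟩ := nonempty_equiv_prod (mk_set_le R)
  refine ⟨_, thickFibers_fst_equiv (mk_set_le R) e Subtype.val, ?_⟩
  have hsurj : Surjective fun x => (e x).1 := Prod.fst_surjective.comp e.surjective
  exact (hsurj.range_comp Subtype.val).trans Subtype.range_val

theorem exists_thickFibers_mk_range_eq_mk_compl_range_eq [Infinite X] :
    ∃ F : X → X, ThickFibers F ∧ #(range F) = #X ∧ #((range F)ᶜ : Set X) = #X := by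
  obtain ⟨j, hj, hco⟩ := exists_injective_mk_compl_range (le_refl #X)
  obtain ⟨F, hF, hrange⟩ := exists_thickFibers_range_eq (range_nonempty j)
  exact ⟨F, hF, hrange ▸ mk_range_eq j hj, hrange ▸ hco⟩

theorem colargeRangeOps_not_subset_polymorphisms {M : Set (X → X)} {F : X → X} (hid : id ∈ M)
    (hF : F ∉ M) (hco : #((range F)ᶜ : Set X) = #X) : ¬ colargeRangeOps X ⊆ polymorphisms M :=
  fun h => hF (mem_of_unaryOp_mem_polymorphisms hid (h (unaryOp_mem_colargeRangeOps.2 hco)))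

theorem colargeRangeOps_not_subset_polymorphisms_fewLargeFibers [Infinite X] :
    ¬ colargeRangeOps X ⊆ polymorphisms (fewLargeFibers X) := by
  obtain ⟨F, hF, hrange, hco⟩ := exists_thickFibers_mk_range_eq_mk_compl_range_eq (X := X)
  refine colargeRangeOps_not_subset_polymorphisms ?_ (fun hsmall => ?_) hco
  · have hempty : {y : X | #(id ⁻¹' {y}) = #X} = ∅ := by
      refine eq_empty_of_forall_notMem fun y hy => ?_
      rw [mem_ofPred_eq, preimage_id, mk_singleton] at hy
      exact (one_lt_aleph0.trans_le (aleph0_le_mk X)).ne hy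
    rw [fewLargeFibers, mem_ofPred_eq, hempty, mk_eq_zero]
    exact pos_iff_ne_zero.2 (mk_ne_zero X)
  · refine hsmall.ne (mk_eq_of_subset ?_ hrange)
    rintro _ ⟨x, rfl⟩
    exact hF x

theorem colargeRangeOps_not_subset_polymorphisms_smallFibers [Infinite X] :
    ¬ colargeRangeOps X ⊆ polymorphisms (smallFibers X) := by
  obtain ⟨F, hF, -, hco⟩ := exists_thickFibers_mk_range_eq_mk_compl_range_eq (X := X)
  refine colargeRangeOps_not_subset_polymorphisms (fun y => ?_) (fun hsmall => ?_) hco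
  · rw [preimage_id, mk_singleton]
    exact one_lt_aleph0.trans_le (aleph0_le_mk X)
  · have x : X := Classical.arbitrary X
    exact (hsmall (F x)).ne (hF x)

theorem id_mem_almostSurjective [Nonempty X] : id ∈ almostSurjective X := by
  rw [almostSurjective, mem_ofPred_eq, range_id, compl_univ, mk_eq_zero]
  exact pos_iff_ne_zero.2 (mk_ne_zero X)

theorem colargeRangeOps_not_subset_polymorphisms_almostSurjective [Infinite X] :
    ¬ colargeRangeOps X ⊆ polymorphisms (almostSurjective X) := by
  obtain ⟨F, -, -, hco⟩ := exists_thickFibers_mk_range_eq_mk_compl_range_eq (X := X)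
  exact colargeRangeOps_not_subset_polymorphisms id_mem_almostSurjective (fun h => h.ne hco) hco

theorem colargeRangeOps_not_subset_polymorphisms_almostSurjectiveOrConst [Infinite X] :
    ¬ colargeRangeOps X ⊆ polymorphisms (almostSurjectiveOrConst X) := by
  obtain ⟨F, -, hrange, hco⟩ := exists_thickFibers_mk_range_eq_mk_compl_range_eq (X := X)
  refine colargeRangeOps_not_subset_polymorphisms (Or.inl id_mem_almostSurjective) ?_ hco
  rintro (hlt | hconst)
  · exact hlt.ne hco
  · have hsub : (range F).Subsingleton := by
      rintro _ ⟨x, rfl⟩ _ ⟨y, rfl⟩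
      exact hconst x y
    refine ((mk_le_one_iff_set_subsingleton.2 hsub).trans_lt ?_).ne hrange
    exact one_lt_aleph0.trans_le (aleph0_le_mk X)

theorem ThickFibers.mem_fewSingletonFibers [Infinite X] {F : X → X} (hF : ThickFibers F) :
    F ∈ fewSingletonFibers X := by
  have hempty : {x | ∀ x', F x' = F x → x' = x} = ∅ := by
    refine eq_empty_of_forall_notMem fun x hx => ?_
    have hfiber : F ⁻¹' {F x} = {x} := eq_singleton_iff_unique_mem.2 ⟨rfl, hx⟩
    have hone := hF x
    rw [hfiber, mk_singleton] at hone
    exact (one_lt_aleph0.trans_le (aleph0_le_mk X)).ne hone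
  rw [fewSingletonFibers, mem_ofPred_eq, hempty, mk_eq_zero]
  exact pos_iff_ne_zero.2 (mk_ne_zero X)

theorem colargeRangeOps_not_subset_polymorphisms_fewSingletonFibers [Infinite X] :
    ¬ colargeRangeOps X ⊆ polymorphisms (fewSingletonFibers X) := by
  intro hsub
  obtain ⟨g, hg, hgco⟩ := exists_injective_mem_colargeRangeOps (X := X) 1
  obtain ⟨e⟩ := nonempty_equiv_prod (le_refl #X)
  have hlt := hsub hgco ![fun x => (e x).1, fun x => (e x).2] <| Fin.forall_fin_two.2
    ⟨(thickFibers_fst_equiv le_rfl e id).mem_fewSingletonFibers,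
      (thickFibers_fst_equiv le_rfl (e.trans (Equiv.prodComm X X)) id).mem_fewSingletonFibers⟩
  refine hlt.ne (mk_eq_of_subset (A := Set.univ) (fun x _ x' hx' => ?_) mk_univ)
  have hcoord := hg hx'
  exact e.injective (Prod.ext (congrFun hcoord 0) (congrFun hcoord 1))

theorem colargeRangeOps_not_subset_polymorphisms_smallRowsOrColumns [Infinite X] :
    ¬ colargeRangeOps X ⊆ polymorphisms (smallRowsOrColumns X) := by
  intro hsub
  obtain ⟨g, hg, hgco⟩ := exists_injective_mem_colargeRangeOps (X := X) 1
  have hconst : ∀ c : X, #(range fun _ : X => c) < #X := fun c => by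
    rw [range_const, mk_singleton]
    exact one_lt_aleph0.trans_le (aleph0_le_mk X)
  have x₀ : X := Classical.arbitrary X
  rcases hsub hgco ![Prod.fst, Prod.snd]
    (Fin.forall_fin_two.2 ⟨Or.inl hconst, Or.inr hconst⟩) with hrow | hcol
  · exact (hrow x₀).ne (mk_range_eq _ fun y y' h => congrFun (hg h) 1)
  · exact (hcol x₀).ne (mk_range_eq _ fun x x' h => congrFun (hg h) 0)

theorem unaryOp_mem_polymorphisms_fewSingletonFibers (F : X → X) :
    unaryOp F ∈ polymorphisms (fewSingletonFibers X) := fun _ hg =>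
  (mk_le_mk_of_subset fun x (hx : ∀ x', _ → x' = x) x' h => hx x' (congrArg F h)).trans_lt (hg 0)

theorem unaryOp_mem_polymorphisms_smallRowsOrColumns (F : X → X) :
    unaryOp F ∈ polymorphisms (smallRowsOrColumns X) := by
  have hcomp : ∀ h : X → X, #(range h) < #X → #(range (F ∘ h)) < #X := fun h hlt => by
    rw [range_comp]
    exact mk_image_le.trans_lt hlt
  exact fun g hg => (hg 0).imp (fun h x => hcomp _ (h x)) fun h y => hcomp _ (h y)

end ColargeRange

section DefectClones

theorem colargeRangeOps_subset_defectClone {l : Cardinal.{u}} (hl : l ≤ #X) :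
    colargeRangeOps X ⊆ defectClone X l := fun f hf _ _ =>
  hl.trans <| (show #((range f.2)ᶜ : Set X) = #X from hf).ge.trans <|
    mk_le_mk_of_subset <| compl_subset_compl.2 <| image_subset_range _ _

theorem unaryOp_mem_defectClone {F : X → X} {l : Cardinal.{u}} :
    unaryOp F ∈ defectClone X l ↔
      ∀ D : Set X, l ≤ #(Dᶜ : Set X) → l ≤ #((F '' D)ᶜ : Set X) := by
  have himage : ∀ D : Fin ((unaryOp F).1 + 1) → Set X,
      (unaryOp F).2 '' Set.univ.pi D = F '' D (0 : Fin 1) := fun D =>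
    Subset.antisymm (image_subset_iff.2 fun x hx => ⟨x 0, hx 0 trivial, rfl⟩)
      (image_subset_iff.2 fun x hx =>
        ⟨fun _ => x, fun i _ => Subsingleton.elim (0 : Fin 1) i ▸ hx, rfl⟩)
  refine ⟨fun h D hD => ?_, fun h D hD => ?_⟩
  · have hbox := h (fun _ => D) fun _ => hD
    rwa [himage] at hbox
  · rw [himage]
    exact h _ (hD (0 : Fin 1))

theorem isPermClone_defectClone (l : Cardinal.{u}) : IsPermClone (defectClone X l) where
  isClone := isClone_defectClone l
  perm_mem γ := unaryOp_mem_defectClone.2 fun D hD => by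
    rwa [← image_compl_eq γ.bijective, mk_image_eq γ.injective]

theorem ThickFibers.unaryOp_mem_defectClone [Infinite X] {F : X → X} (hF : ThickFibers F)
    {l : Cardinal.{u}} (hl : l ≤ #X) :
    unaryOp F ∈ defectClone X l ↔ l ≤ #((range F)ᶜ : Set X) := by
  refine _root_.unaryOp_mem_defectClone.trans ⟨fun h => ?_, fun h D _ => h.trans ?_⟩
  · obtain ⟨S, -, hS⟩ := exists_subset_bijOn Set.univ F
    have x₀ : X := Classical.arbitrary X
    have hfiber : (F ⁻¹' {F x₀} ∩ S).Subsingleton := fun x hx y hy =>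
      hS.injOn hx.2 hy.2 (hx.1.trans hy.1.symm)
    have hSco : #(Sᶜ : Set X) = #X := by
      refine mk_eq_of_subset (A := F ⁻¹' {F x₀} \ (F ⁻¹' {F x₀} ∩ S)) (fun x hx hxS => ?_)
        (mk_diff_eq_of_lt (hF x₀) ?_)
      · exact hx.2 ⟨hx.1, hxS⟩
      · exact (mk_le_one_iff_set_subsingleton.2 hfiber).trans_lt
          (one_lt_aleph0.trans_le (aleph0_le_mk X))
    rw [← image_univ, ← hS.image_eq]
    exact h S (hSco ▸ hl)
  · exact mk_le_mk_of_subset (compl_subset_compl.2 (image_subset_range F D))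

theorem not_forall_unaryOp_mem_defectClone [Infinite X] {l : Cardinal.{u}} (hone : 1 ≤ l)
    (hl : l ≤ #X) : ¬ ∀ F : X → X, unaryOp F ∈ defectClone X l := by
  intro h
  obtain ⟨F, hF, hrange⟩ := exists_thickFibers_range_eq (X := X) univ_nonempty
  have hle := (hF.unaryOp_mem_defectClone hl).1 (h F)
  rw [hrange, compl_univ, mk_eq_zero] at hle
  exact absurd (hone.trans hle) (by simp)

theorem defectClone_not_subset_of_lt [Infinite X] {l μ : Cardinal.{u}} (hlμ : l < μ)
    (hμ : μ ≤ #X) : ¬ defectClone X l ⊆ defectClone X μ := by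
  intro hsub
  obtain ⟨E, hE⟩ := le_mk_iff_exists_set.1 (hlμ.le.trans hμ)
  have hne : Eᶜ.Nonempty := by
    rw [nonempty_compl]
    rintro rfl
    exact (hlμ.trans_le hμ).ne (hE.symm.trans mk_univ)
  obtain ⟨F, hF, hrange⟩ := exists_thickFibers_range_eq hne
  have hdefect : #((range F)ᶜ : Set X) = l := by rw [hrange, compl_compl, hE]
  have hmem := hsub ((hF.unaryOp_mem_defectClone (hlμ.le.trans hμ)).2 hdefect.ge)
  exact hlμ.not_ge (hdefect ▸ (hF.unaryOp_mem_defectClone hμ).1 hmem)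

theorem mk_compl_le_of_image_sumElim_eq_univ {T : Type u} {x₀ : X} {D : Set (X ⊕ T)}
    (hD : Sum.elim id (fun _ => x₀) '' D = Set.univ) : #(Dᶜ : Set (X ⊕ T)) ≤ #T := by
  classical
  obtain ⟨w, hwD, hw⟩ := hD.ge (mem_univ x₀)
  -- The section of `Sum.elim id _` through `w` differs from `Sum.inl` only at `x₀`.
  have hsub : Dᶜ ⊆ Equiv.swap (Sum.inl x₀) w '' range Sum.inr := by
    rintro (x | t) hv
    · obtain rfl : x = x₀ := by
        by_contra hx
        obtain ⟨x' | t, hD', rfl⟩ := hD.ge (mem_univ x)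
        · exact hv hD'
        · exact hx rfl
      rcases w with x' | t
      · obtain rfl : x' = x := hw
        exact absurd hwD hv
      · exact ⟨_, mem_range_self t, Equiv.swap_apply_right _ _⟩
    · refine ⟨_, mem_range_self t, Equiv.swap_apply_of_ne_of_ne Sum.inr_ne_inl ?_⟩
      rintro rfl
      exact hv hwD
  exact (mk_le_mk_of_subset hsub).trans (mk_image_le.trans mk_range_le)

theorem exists_forall_mk_compl_le_of_image_eq_univ [Infinite X] {μ : Cardinal.{u}} (hμ : μ ≤ #X) :
    ∃ r : X → X, (∃ D, #(Dᶜ : Set X) = μ ∧ r '' D = Set.univ) ∧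
      ∀ D, r '' D = Set.univ → #(Dᶜ : Set X) ≤ μ := by
  obtain ⟨E, rfl⟩ := le_mk_iff_exists_set.1 hμ
  have hsum : #(X ⊕ E) = #X := by
    rw [mk_sum, lift_id, lift_id, add_eq_left (aleph0_le_mk X) (mk_set_le E)]
  obtain ⟨e⟩ := Cardinal.eq.1 hsum
  refine ⟨Sum.elim id (fun _ => Classical.arbitrary X) ∘ e.symm,
    ⟨e '' range Sum.inl, ?_, ?_⟩, fun D hD => ?_⟩
  · rw [← image_compl_eq e.bijective, mk_image_eq e.injective, compl_range_inl,
      mk_range_eq _ Sum.inr_injective]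
  · rw [← image_comp, comp_assoc, e.symm_comp_self, comp_id, ← range_comp]
    exact range_id
  · rw [image_comp] at hD
    rw [← mk_image_eq e.symm.injective, image_compl_eq e.symm.bijective]
    exact mk_compl_le_of_image_sumElim_eq_univ hD

theorem defectClone_not_subset_of_gt [Infinite X] {l μ : Cardinal.{u}} (hone : 1 ≤ μ)
    (hμl : μ < l) (hl : l ≤ #X) : ¬ defectClone X l ⊆ defectClone X μ := by
  intro hsub
  obtain ⟨r, ⟨D, hDμ, hD⟩, hr⟩ := exists_forall_mk_compl_le_of_image_eq_univ (hμl.le.trans hl)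
  obtain ⟨e⟩ := nonempty_equiv_prod (le_refl #X)
  let f : (Fin 2 → X) → X := fun x => e.symm (r (x 0), r (x 1))
  have hf : (⟨1, f⟩ : Ops X) ∈ defectClone X l := by
    intro D' hD'
    obtain ⟨a, ha⟩ := (ne_univ_iff_exists_notMem (r '' D' 0)).1 fun huniv =>
      hμl.not_ge ((hD' 0).trans (hr _ huniv))
    refine hl.trans (mk_eq_of_injective_of_forall_mem le_rfl
      (e.symm.injective.comp (Prod.mk_right_injective a)) fun y => ?_).ge
    rintro ⟨x, hx, hxy⟩
    exact ha ⟨x 0, hx 0 trivial, congrArg Prod.fst (e.symm.injective hxy)⟩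
  have hfD : f '' Set.univ.pi (fun _ => D) = Set.univ := by
    refine eq_univ_of_forall fun y => ?_
    obtain ⟨a, ha, hay⟩ : (e y).1 ∈ r '' D := hD ▸ mem_univ _
    obtain ⟨b, hb, hby⟩ : (e y).2 ∈ r '' D := hD ▸ mem_univ _
    refine ⟨![a, b], fun i _ => (Fin.forall_fin_two (p := fun i => ![a, b] i ∈ D)).2 ⟨ha, hb⟩ i, ?_⟩
    exact e.symm_apply_eq.2 (Prod.ext hay hby)
  have hle : μ ≤ #((f '' Set.univ.pi fun _ => D)ᶜ : Set X) := hsub hf (fun _ => D) fun _ => hDμ.ge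
  rw [hfD, compl_univ, mk_eq_zero] at hle
  exact absurd (hone.trans hle) (by simp)

theorem defectClone_subset_defectClone_iff [Infinite X] {l μ : Cardinal.{u}} (hl : l ≤ #X)
    (hμ : μ ∈ Icc 1 #X) : defectClone X l ⊆ defectClone X μ ↔ l = μ := by
  refine ⟨fun h => ?_, fun h => h ▸ Subset.rfl⟩
  rcases lt_trichotomy l μ with hlt | heq | hgt
  · exact absurd h (defectClone_not_subset_of_lt hlt hμ.2)
  · exact heq
  · exact absurd h (defectClone_not_subset_of_gt hμ.1 hgt hl)

theorem injOn_defectClone [Infinite X] : InjOn (defectClone X) (Icc 1 #X) := fun _ hl _ hμ h =>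
  (defectClone_subset_defectClone_iff hl.2 hμ).1 h.subset

end DefectClones

section Precomplete

theorem isPrecompleteClone_defectClone (hreg : (#X).IsRegular) {l : Cardinal.{u}}
    (hone : 1 ≤ l) (hl : l ≤ #X) : IsPrecompleteClone (defectClone X l) := by
  have : Infinite X := infinite_iff.2 hreg.aleph0_le
  refine ⟨isClone_defectClone l, fun huniv =>
    not_forall_unaryOp_mem_defectClone hone hl fun F => huniv ▸ mem_univ _, fun f hf => ?_⟩
  have hsub : defectClone X l ⊆ cloneGen (insert f (defectClone X l)) :=
    (subset_insert _ _).trans (subset_cloneGen _)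
  have hco := (colargeRangeOps_subset_defectClone hl).trans hsub
  have hC : IsPermClone (cloneGen (insert f (defectClone X l))) :=
    ⟨isClone_cloneGen _, fun γ => hsub ((isPermClone_defectClone l).perm_mem γ)⟩
  refine hC.isClone.eq_univ_of_colargeRangeOps_subset (hC.forall_unaryOp_mem hreg
    (fun h => colargeRangeOps_not_subset_polymorphisms_fewLargeFibers (hco.trans h))
    (fun h => colargeRangeOps_not_subset_polymorphisms_smallFibers (hco.trans h))
    (fun h => colargeRangeOps_not_subset_polymorphisms_almostSurjective (hco.trans h))
    (fun h => colargeRangeOps_not_subset_polymorphisms_almostSurjectiveOrConst (hco.trans h))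
    (fun h => colargeRangeOps_not_subset_polymorphisms_fewSingletonFibers (hco.trans h))
    (fun h => colargeRangeOps_not_subset_polymorphisms_smallRowsOrColumns (hco.trans h))
    fun μ hμ₁ hμ h => ?_) hco
  obtain rfl := (defectClone_subset_defectClone_iff hl ⟨hμ₁, hμ⟩).1 (hsub.trans h)
  exact hf (h (subset_cloneGen _ (mem_insert _ _)))

theorem IsPrecompleteClone.eq_polymorphisms_of_subset {C : Set (Ops X)}
    (hC : IsPrecompleteClone C) {ι : Type u} {M : Set (ι → X)}
    (hM : ¬ colargeRangeOps X ⊆ polymorphisms M) (h : C ⊆ polymorphisms M) :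
    C = polymorphisms M :=
  hC.eq_of_subset (isClone_polymorphisms M) (fun huniv => hM (huniv ▸ subset_univ _)) h

theorem IsPrecompleteClone.mem_of_not_forall_unaryOp_mem {C : Set (Ops X)}
    (hC : IsPrecompleteClone C) (hreg : (#X).IsRegular)
    (hperm : ∀ γ : Equiv.Perm X, unaryOp γ ∈ C) (hunary : ¬ ∀ F : X → X, unaryOp F ∈ C) :
    C ∈ defectClone X '' Icc 1 #X ∪ polymorphisms ''
      {fewLargeFibers X, smallFibers X, almostSurjective X, almostSurjectiveOrConst X} := by
  have : Infinite X := infinite_iff.2 hreg.aleph0_le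
  by_contra hnot
  have hpoly : ∀ {M : Set (X → X)}, ¬ colargeRangeOps X ⊆ polymorphisms M →
      M ∈ ({fewLargeFibers X, smallFibers X, almostSurjective X,
        almostSurjectiveOrConst X} : Set (Set (X → X))) → ¬ C ⊆ polymorphisms M :=
    fun hM hmem h => hnot (Or.inr ⟨_, hmem, (hC.eq_polymorphisms_of_subset hM h).symm⟩)
  refine hunary (IsPermClone.forall_unaryOp_mem ⟨hC.1, hperm⟩ hreg
    (hpoly colargeRangeOps_not_subset_polymorphisms_fewLargeFibers (by simp))
    (hpoly colargeRangeOps_not_subset_polymorphisms_smallFibers (by simp))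
    (hpoly colargeRangeOps_not_subset_polymorphisms_almostSurjective (by simp))
    (hpoly colargeRangeOps_not_subset_polymorphisms_almostSurjectiveOrConst (by simp))
    (fun h => hunary ?_) (fun h => hunary ?_) fun l hl₁ hl h => hnot (Or.inl ⟨l, ⟨hl₁, hl⟩, ?_⟩))
  · rw [hC.eq_polymorphisms_of_subset
      colargeRangeOps_not_subset_polymorphisms_fewSingletonFibers h]
    exact unaryOp_mem_polymorphisms_fewSingletonFibers
  · rw [hC.eq_polymorphisms_of_subset
      colargeRangeOps_not_subset_polymorphisms_smallRowsOrColumns h]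
    exact unaryOp_mem_polymorphisms_smallRowsOrColumns
  · refine (hC.eq_of_subset (isClone_defectClone l) (fun huniv => ?_) h).symm
    exact not_forall_unaryOp_mem_defectClone hl₁ hl fun F => huniv ▸ mem_univ _

theorem image_preAleph_one_add (α : Ordinal.{u}) :
    (fun o => preAleph (1 + o)) '' Iic (Ordinal.omega0 + α) = Icc 1 (aleph α) := by
  have hone : preAleph 1 = 1 := by simpa using preAleph_natCast 1
  have homega : 1 + (Ordinal.omega0 + α) = Ordinal.omega0 + α := by
    rw [← add_assoc, Ordinal.one_add_omega0]
  refine Subset.antisymm ?_ fun c hc => ?_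
  · rintro _ ⟨o, ho, rfl⟩
    refine ⟨hone ▸ preAleph_le_preAleph.2 le_self_add, ?_⟩
    rw [aleph_eq_preAleph, preAleph_le_preAleph, ← homega]
    exact add_le_add_right ho 1
  · obtain ⟨o, rfl⟩ := preAleph.surjective c
    obtain ⟨h₁, h₂⟩ := hc
    rw [← hone, preAleph_le_preAleph] at h₁
    rw [aleph_eq_preAleph, preAleph_le_preAleph, ← Ordinal.add_sub_cancel_of_le h₁, ← homega,
      add_le_add_iff_left] at h₂
    exact ⟨o - 1, h₂, congrArg preAleph (Ordinal.add_sub_cancel_of_le h₁)⟩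

theorem mk_Icc_one_aleph (α : Ordinal.{u}) :
    #(Icc 1 (aleph α)) = lift.{u + 1} (max α.card ℵ₀) := by
  have hinj : Injective fun o => preAleph (1 + o) := fun o o' h => by simpa using h
  rw [← image_preAleph_one_add, mk_image_eq hinj, ← Order.Iio_succ, mk_Iio_ordinal]
  rw [Order.succ_eq_add_one, Ordinal.card_add, Ordinal.card_add, Ordinal.card_omega0,
    Ordinal.card_one, add_eq_max le_rfl, add_one_eq (le_max_left _ _), max_comm]

theorem mk_defectClone_image {α : Ordinal.{u}} (hcard : #X = aleph α) :
    #(defectClone X '' Icc 1 #X) = max α.card ℵ₀ := by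
  have : Infinite X := infinite_iff.2 (hcard ▸ aleph0_le_aleph α)
  have himage := mk_image_eq_of_injOn_lift _ _ (injOn_defectClone (X := X))
  rw [hcard, mk_Icc_one_aleph, lift_id'.{u, u + 1}] at himage
  rw [hcard]
  exact lift_injective himage

end Precomplete

end

/-- **Pinsker**: on a set of regular cardinality `ℵ_α`, the number of precomplete clones
containing all permutations but not all unary operations is `max(|α|, ℵ₀)`. -/
theorem stmt11 {X : Type u} (α : Ordinal.{u}) (hcard : #X = Cardinal.aleph α)
    (hreg : (#X).IsRegular) :
    #{C : Set (Ops X) // IsPrecompleteClone C ∧ (∀ γ : Equiv.Perm X, unaryOp ⇑γ ∈ C) ∧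
        ¬ (∀ F : X → X, unaryOp F ∈ C)} = max α.card ℵ₀ := by
  have : Infinite X := infinite_iff.2 hreg.aleph0_le
  have hlower : defectClone X '' Set.Icc 1 #X ⊆
      {C | IsPrecompleteClone C ∧ (∀ γ : Equiv.Perm X, unaryOp γ ∈ C) ∧
        ¬ ∀ F : X → X, unaryOp F ∈ C} := by
    rintro _ ⟨l, ⟨hl₁, hl⟩, rfl⟩
    exact ⟨isPrecompleteClone_defectClone hreg hl₁ hl, (isPermClone_defectClone l).perm_mem,
      not_forall_unaryOp_mem_defectClone hl₁ hl⟩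
  have hcount := mk_defectClone_image hcard
  refine le_antisymm ?_ (hcount ▸ mk_le_mk_of_subset hlower)
  refine (mk_le_mk_of_subset fun C hC =>
    IsPrecompleteClone.mem_of_not_forall_unaryOp_mem hC.1 hreg hC.2.1 hC.2.2).trans ?_
  refine (mk_union_le _ _).trans (add_le_of_le (le_max_right _ _) hcount.le ?_)
  exact ((Set.toFinite _).lt_aleph0.le).trans (le_max_right _ _)
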